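/- arXiv:2302.09623 — 4 statements merged into one kernel-verified Lean document; each statement's English description precedes it below -/
import Mathlib

section
/- Let p = 1 or p = ∞, let F : 𝕋 → ℂ be absolutely continuous with Ḟ ∈ L^p(𝕋), and let f = P[F] be its Poisson integral. Then the function z = re^{iθ} ↦ r f_r(z) belongs to the harmonic Hardy space h^p(𝔻) if and only if the Hilbert transform H(Ḟ) belongs to L^p(𝕋). -/
open MeasureTheory Complex Metric Set Filter
open scoped Real Topology ENNReal

noncomputable section

/-- The Poisson kernel `P(z) = (1-|z|^2)/|1-z|^2`. -/
def poissonKer (z : ℂ) : ℝ := (1 - ‖z‖ ^ 2) / ‖1 - z‖ ^ 2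

/-- The Poisson integral of a boundary function `F` defined on the unit circle. -/
def poissonInt (F : ℂ → ℂ) (z : ℂ) : ℂ :=
  (1 / (2 * π)) * ∫ t in (0:ℝ)..(2 * π),
    (poissonKer (z * Complex.exp (-(t : ℂ) * Complex.I)) : ℂ) *
      F (Complex.exp ((t : ℂ) * Complex.I))

/-- The Poisson integral of a (2π-periodic) function of the angular variable. -/
def poissonIntR (φ : ℝ → ℂ) (z : ℂ) : ℂ :=
  (1 / (2 * π)) * ∫ t in (0:ℝ)..(2 * π),
    (poissonKer (z * Complex.exp (-(t : ℂ) * Complex.I)) : ℂ) * φ t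

/-- The conjugate Poisson kernel `P̃(z) = Im((1+z)/(1-z))`. -/
def conjPoissonKer (z : ℂ) : ℝ := ((1 + z) / (1 - z)).im

/-- The conjugate Poisson integral of a function of the angular variable. -/
def conjPoissonIntR (φ : ℝ → ℂ) (z : ℂ) : ℂ :=
  (1 / (2 * π)) * ∫ t in (0:ℝ)..(2 * π),
    (conjPoissonKer (z * Complex.exp (-(t : ℂ) * Complex.I)) : ℂ) * φ t

/-- Wirtinger derivative `f_z = (1/2)(∂ₓ - i ∂_y) f`. -/
def wdz (f : ℂ → ℂ) (z : ℂ) : ℂ :=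
  (1 / 2) * (fderiv ℝ f z 1 - Complex.I * fderiv ℝ f z Complex.I)

/-- Wirtinger derivative `f_z̄ = (1/2)(∂ₓ + i ∂_y) f`. -/
def wdzb (f : ℂ → ℂ) (z : ℂ) : ℂ :=
  (1 / 2) * (fderiv ℝ f z 1 + Complex.I * fderiv ℝ f z Complex.I)

/-- The angular derivative `f_θ(z) = i (z f_z(z) - z̄ f_z̄(z))`. -/
def fTheta (f : ℂ → ℂ) (z : ℂ) : ℂ :=
  Complex.I * (z * wdz f z - (starRingEnd ℂ) z * wdzb f z)

/-- The radial derivative multiplied by `r`: `r f_r(z) = z f_z(z) + z̄ f_z̄(z)`. -/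
def rFr (f : ℂ → ℂ) (z : ℂ) : ℂ :=
  z * wdz f z + (starRingEnd ℂ) z * wdzb f z

/-- `F : 𝕋 → ℂ` is absolutely continuous with angular derivative `Ḟ = Fd`,
i.e. `t ↦ F(e^{it})` is an indefinite integral of the (locally integrable,
2π-periodic) function `Fd`. -/
def IsACDeriv (F : ℂ → ℂ) (Fd : ℝ → ℂ) : Prop :=
  (∀ a b : ℝ, IntervalIntegrable Fd MeasureTheory.volume a b) ∧
  Function.Periodic Fd (2 * π) ∧
  ∀ t : ℝ, F (Complex.exp ((t : ℂ) * Complex.I)) = F 1 + ∫ s in (0:ℝ)..t, Fd s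

/-- membership in `L^p(𝕋)`, identifying `𝕋` with `[0, 2π)`. -/
def MemLpT (p : ℝ≥0∞) (φ : ℝ → ℂ) : Prop :=
  MeasureTheory.MemLp φ p (MeasureTheory.volume.restrict (Ioc (0:ℝ) (2 * π)))

/-- The integral mean `M_p(r, g)`. -/
def Mp (p : ℝ) (g : ℂ → ℂ) (r : ℝ) : ℝ :=
  ((1 / (2 * π)) * ∫ θ in (0:ℝ)..(2 * π),
      ‖g ((r : ℂ) * Complex.exp ((θ : ℂ) * Complex.I))‖ ^ p) ^ (1 / p)

/-- The `L^p(𝕋)` norm `((1/2π) ∫ |φ|^p)^{1/p}`. -/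
def lpNormT (p : ℝ) (φ : ℝ → ℂ) : ℝ :=
  ((1 / (2 * π)) * ∫ t in (0:ℝ)..(2 * π), ‖φ t‖ ^ p) ^ (1 / p)

/-- Membership in the analytic Hardy space `H^p(𝔻)` for `p ∈ [1, ∞)`. -/
def MemHp (p : ℝ) (g : ℂ → ℂ) : Prop :=
  DifferentiableOn ℂ g (ball (0:ℂ) 1) ∧ ∃ M : ℝ, ∀ r ∈ Ioo (0:ℝ) 1, Mp p g r ≤ M

/-- Membership in `H^∞(𝔻)`: bounded analytic functions on the unit disk. -/
def MemHinf (g : ℂ → ℂ) : Prop :=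
  DifferentiableOn ℂ g (ball (0:ℂ) 1) ∧ ∃ M : ℝ, ∀ z ∈ ball (0:ℂ) 1, ‖g z‖ ≤ M

/-- Harmonicity on the unit disk: `f` is C² with vanishing Laplacian. -/
def HarmonicOnD (f : ℂ → ℂ) : Prop :=
  ContDiffOn ℝ 2 f (ball (0:ℂ) 1) ∧
  ∀ z ∈ ball (0:ℂ) 1,
    fderiv ℝ (fun w => fderiv ℝ f w 1) z 1
      + fderiv ℝ (fun w => fderiv ℝ f w Complex.I) z Complex.I = 0

/-- Membership in the harmonic Hardy space `h^p(𝔻)` for `p ∈ [1, ∞)`. -/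
def Memhp (p : ℝ) (g : ℂ → ℂ) : Prop :=
  HarmonicOnD g ∧ ∃ M : ℝ, ∀ r ∈ Ioo (0:ℝ) 1, Mp p g r ≤ M

/-- Membership in `h^∞(𝔻)`: bounded harmonic functions on the unit disk. -/
def Memhinf (g : ℂ → ℂ) : Prop :=
  HarmonicOnD g ∧ ∃ M : ℝ, ∀ z ∈ ball (0:ℂ) 1, ‖g z‖ ≤ M

/-- `L` is the value of the principal-value Hilbert transform
`(1/2π) p.v. ∫ φ(t)/tan((θ-t)/2) dt` of (the 2π-periodic) `φ` at `θ`. -/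
def IsPVHilbert (φ : ℝ → ℂ) (θ : ℝ) (L : ℂ) : Prop :=
  Filter.Tendsto
    (fun ε : ℝ => (1 / (2 * π)) *
      ∫ t in Ioo (θ - π) (θ + π) \ Ioo (θ - ε) (θ + ε),
        φ t / (Real.tan ((θ - t) / 2) : ℂ))
    (nhdsWithin 0 (Ioi 0)) (nhds L)


/-- Herglotz kernel. -/
def hker (z : ℂ) (t : ℝ) : ℂ := (cexp (t * I) + z) / (cexp (t * I) - z)

/-- Schwarz integral. -/
def Sch (φ : ℝ → ℂ) (z : ℂ) : ℂ := (1 / (2 * π)) * ∫ t in (0:ℝ)..(2 * π), hker z t * φ t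

lemma hker_eq (z : ℂ) (t : ℝ) : hker z t =
    (1 + z * cexp (-(t : ℂ) * I)) / (1 - z * cexp (-(t : ℂ) * I)) := by
  have h : cexp (-(t : ℂ) * I) = (cexp (t * I))⁻¹ := by rw [neg_mul, Complex.exp_neg]
  have h0 : cexp (t * I) ≠ 0 := Complex.exp_ne_zero _
  rw [h, hker]
  rw [← mul_div_mul_left _ (1 - z * (cexp (t * I))⁻¹) h0]
  congr 1 <;> field_simp

lemma hker_im (z : ℂ) (t : ℝ) : (hker z t).im = conjPoissonKer (z * cexp (-(t : ℂ) * I)) := by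
  rw [hker_eq]; rfl

lemma hker_re (z : ℂ) (t : ℝ) : (hker z t).re = poissonKer (z * cexp (-(t : ℂ) * I)) := by
  rw [hker_eq, poissonKer]
  generalize z * cexp (-(t : ℂ) * I) = w
  have := congrFun (@poissonKernel_eq_re_herglotzRieszKernel 0 w) 1
  simp [poissonKernel, herglotzRieszKernel] at this
  exact this.symm

lemma exp_sub_lower {z : ℂ} (t : ℝ) : 1 - ‖z‖ ≤ ‖cexp (t * I) - z‖ := by
  have := norm_sub_norm_le (cexp (t * I)) z
  rwa [Complex.norm_exp_ofReal_mul_I] at this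

lemma exp_sub_ne {z : ℂ} (hz : ‖z‖ < 1) (t : ℝ) : cexp (t * I) - z ≠ 0 := by
  have := exp_sub_lower (z := z) t
  rw [← norm_pos_iff]; linarith

lemma hker_cont {z : ℂ} (hz : ‖z‖ < 1) : Continuous (hker z) := by
  unfold hker
  exact Continuous.div (by fun_prop) (by fun_prop) (exp_sub_ne hz)

lemma poissonKer_nonneg {z : ℂ} (hz : ‖z‖ < 1) : 0 ≤ poissonKer z := by
  unfold poissonKer
  have : ‖z‖ ^ 2 ≤ 1 := by nlinarith [norm_nonneg z]
  apply div_nonneg (by linarith) (by positivity)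

lemma norm_rot (z : ℂ) (t : ℝ) : ‖z * cexp (-(t : ℂ) * I)‖ = ‖z‖ := by
  rw [norm_mul, ← ofReal_neg, Complex.norm_exp_ofReal_mul_I, mul_one]

lemma hker_re_nonneg {z : ℂ} (hz : ‖z‖ < 1) (t : ℝ) : 0 ≤ (hker z t).re := by
  rw [hker_re]
  apply poissonKer_nonneg
  rwa [norm_rot]

lemma Sch_hasDerivAt {φ : ℝ → ℂ} (hφ : IntervalIntegrable φ volume 0 (2 * π)) {z : ℂ}
    (hz : ‖z‖ < 1) : HasDerivAt (Sch φ)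
      ((1 / (2 * π)) * ∫ t in (0:ℝ)..(2 * π), (2 * cexp (t * I) / (cexp (t * I) - z) ^ 2) * φ t) z := by
  unfold Sch
  apply HasDerivAt.const_mul
  have hφm := (intervalIntegrable_iff.1 hφ).aestronglyMeasurable
  set d := (1 - ‖z‖) / 2 with hd
  have hdpos : 0 < d := by linarith
  have hb : ∀ x ∈ ball z d, d ≤ 1 - ‖x‖ := by
    intro x hx
    have : ‖x - z‖ < d := by simpa [dist_eq_norm] using hx
    have := norm_sub_norm_le x z
    linarith
  refine (intervalIntegral.hasDerivAt_integral_of_dominated_loc_of_deriv_le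
    (F' := fun x t ↦ (2 * cexp (t * I) / (cexp (t * I) - x) ^ 2) * φ t)
    (bound := fun t ↦ 2 * (d ^ 2)⁻¹ * ‖φ t‖)
    (ball_mem_nhds z hdpos) ?meas1 ?int ?meas2 ?bound ?int_bound ?diff).2
  case meas1 =>
    filter_upwards with x
    apply AEStronglyMeasurable.mul _ hφm
    unfold hker
    exact Measurable.aestronglyMeasurable (by fun_prop)
  case int =>
    exact hφ.continuousOn_mul (hker_cont hz).continuousOn
  case meas2 =>
    exact (Measurable.aestronglyMeasurable (by fun_prop)).mul hφm
  case bound =>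
    filter_upwards with θ _ x hx
    have h₁ : ‖(2 : ℂ)‖ = 2 := by norm_num
    rw [norm_mul, norm_div, norm_mul, Complex.norm_exp_ofReal_mul_I, norm_pow,
      div_eq_mul_inv, h₁, mul_one]
    gcongr
    exact (hb x hx).trans (exp_sub_lower θ)
  case int_bound =>
    exact (IntervalIntegrable.norm hφ).const_mul _
  case diff =>
    filter_upwards with θ _ x hx
    have h₁ : cexp (θ * I) - x ≠ 0 := exp_sub_ne (by have := hb x hx; linarith) θ
    have h₃ := ((hasDerivAt_id' x).const_add (cexp (θ * I))).div
        ((hasDerivAt_id' x).const_sub (cexp (θ * I))) h₁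
    have h₂ : HasDerivAt (fun x ↦ hker x θ)
        (2 * cexp (θ * I) / (cexp (θ * I) - x) ^ 2) x := by
      have e : (2 * cexp (θ * I) / (cexp (θ * I) - x) ^ 2) =
          (1 * (cexp (θ * I) - x) - (cexp (θ * I) + x) * -1) / (cexp (θ * I) - x) ^ 2 := by
        congr 1
        ring
      rw [e]
      exact h₃
    exact h₂.mul_const _

lemma Sch_diff {φ : ℝ → ℂ} (hφ : IntervalIntegrable φ volume 0 (2 * π)) :
    DifferentiableOn ℂ (Sch φ) (ball 0 1) := fun _ hw ↦
  (Sch_hasDerivAt hφ (by simpa using hw)).differentiableAt.differentiableWithinAt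

/-- triangle Fubini / integration by parts -/
lemma parts {κ κ' Fd : ℝ → ℂ} {T : ℝ} (hT : 0 ≤ T) (hκ : ∀ t, HasDerivAt κ (κ' t) t)
    (hκ' : Continuous κ') (hFd : IntervalIntegrable Fd volume 0 T) :
    ∫ t in (0:ℝ)..T, κ' t * ∫ s in (0:ℝ)..t, Fd s = ∫ s in (0:ℝ)..T, (κ T - κ s) * Fd s := by
  have hF := (intervalIntegrable_iff_integrableOn_Ioc_of_le hT).1 hFd
  set μ := (volume : Measure ℝ).restrict (Ioc 0 T) with hμ
  have hint : Integrable (Function.uncurry fun t s => (Ici s).indicator κ' t * Fd s) (μ.prod μ) := by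
    have hk : Integrable κ' μ := (hκ'.integrableOn_Icc).mono_set Ioc_subset_Icc_self
    have h1 : Integrable (fun q : ℝ × ℝ => κ' q.1 * Fd q.2) (μ.prod μ) := hk.mul_prod hF
    have h2 := h1.indicator (s := {q : ℝ × ℝ | q.2 ≤ q.1}) (measurableSet_le measurable_snd measurable_fst)
    refine h2.congr (Eventually.of_forall ?_)
    rintro ⟨t, s⟩
    by_cases h : s ≤ t <;> simp [Set.indicator, h]
  have := integral_integral_swap hint
  rw [intervalIntegral.integral_of_le hT, intervalIntegral.integral_of_le hT]
  calc _ = ∫ t, ∫ s, (Ici s).indicator κ' t * Fd s ∂μ ∂μ := by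
        apply setIntegral_congr_fun measurableSet_Ioc
        intro t ht
        simp only
        rw [intervalIntegral.integral_of_le ht.1.le, ← integral_const_mul, hμ]
        rw [← integral_indicator measurableSet_Ioc, ← integral_indicator measurableSet_Ioc]
        congr 1
        ext s
        simp only [Set.indicator, mem_Ioc, mem_Ici]
        have := ht.2
        split_ifs <;> first | rfl | (exfalso; grind) | simp
    _ = _ := this
    _ = _ := by
        apply setIntegral_congr_fun measurableSet_Ioc
        intro s hs
        simp only
        rw [integral_mul_const]
        congr 1
        rw [hμ, ← intervalIntegral.integral_eq_sub_of_hasDerivAt (fun t _ => hκ t)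
          (hκ'.intervalIntegrable _ _), intervalIntegral.integral_of_le hs.2,
          ← integral_indicator measurableSet_Ioc, ← integral_indicator measurableSet_Ioc]
        apply integral_congr_ae
        have : ∀ᵐ t : ℝ, t ≠ s := by simp [ae_iff]
        filter_upwards [this] with t ht
        simp only [Set.indicator, mem_Ioc, mem_Ici]
        have := hs.1
        have := lt_of_le_of_ne' (a := s) (b := t)
        split_ifs <;> first | rfl | (exfalso; grind)


lemma conj_int (f : ℝ → ℂ) (a b : ℝ) :
    (starRingEnd ℂ) (∫ t in a..b, f t) = ∫ t in a..b, (starRingEnd ℂ) (f t) := by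
  simp only [intervalIntegral, map_sub, integral_conj]

lemma conj_Sch (φ : ℝ → ℂ) (z : ℂ) : (starRingEnd ℂ) (Sch (fun t => (starRingEnd ℂ) (φ t)) z) =
    (1 / (2 * π)) * ∫ t in (0:ℝ)..(2 * π), (starRingEnd ℂ) (hker z t) * φ t := by
  unfold Sch
  rw [map_mul, conj_int]
  have : (1 / (2 * π) : ℂ) = ((1 / (2 * π) : ℝ) : ℂ) := by push_cast; ring
  rw [this, conj_ofReal]
  simp

lemma ivi_conj {φ : ℝ → ℂ} {a b : ℝ} (h : IntervalIntegrable φ volume a b) :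
    IntervalIntegrable (fun t => (starRingEnd ℂ) (φ t)) volume a b := by
  constructor
  · exact (Complex.conjLIE.toContinuousLinearEquiv.toContinuousLinearMap.integrable_comp h.1)
  · exact (Complex.conjLIE.toContinuousLinearEquiv.toContinuousLinearMap.integrable_comp h.2)

lemma Sch_comb {φ : ℝ → ℂ} (hφ : IntervalIntegrable φ volume 0 (2 * π)) {z : ℂ}
    (hz : ‖z‖ < 1) (a b : ℂ) :
    a * Sch φ z + b * (starRingEnd ℂ) (Sch (fun t => (starRingEnd ℂ) (φ t)) z) =
     (1 / (2 * π)) * ∫ t in (0:ℝ)..(2 * π), (a * hker z t + b * (starRingEnd ℂ) (hker z t)) * φ t := by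
  rw [conj_Sch, Sch]
  have h1 : IntervalIntegrable (fun t => hker z t * φ t) volume 0 (2 * π) :=
    hφ.continuousOn_mul (hker_cont hz).continuousOn
  have h2 : IntervalIntegrable (fun t => (starRingEnd ℂ) (hker z t) * φ t) volume 0 (2 * π) :=
    hφ.continuousOn_mul (Complex.continuous_conj.comp (hker_cont hz)).continuousOn
  have : ∀ t, (a * hker z t + b * (starRingEnd ℂ) (hker z t)) * φ t =
    a * (hker z t * φ t) + b * ((starRingEnd ℂ) (hker z t) * φ t) := fun t => by ring
  simp_rw [this]
  rw [intervalIntegral.integral_add (h1.const_mul a) (h2.const_mul b),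
    intervalIntegral.integral_const_mul, intervalIntegral.integral_const_mul]
  ring

lemma poissonInt_eq {F : ℂ → ℂ}
    (hφ : IntervalIntegrable (fun t : ℝ => F (cexp (t * I))) volume 0 (2 * π)) {z : ℂ}
    (hz : ‖z‖ < 1) : poissonInt F z = (1/2) * Sch (fun t : ℝ => F (cexp (t * I))) z +
      (1/2) * (starRingEnd ℂ) (Sch (fun t : ℝ => (starRingEnd ℂ) (F (cexp (t * I)))) z) := by
  rw [Sch_comb hφ hz, poissonInt]
  congr 2
  ext t
  congr 1
  rw [← hker_re, Complex.re_eq_add_conj]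
  ring

lemma conjPoissonIntR_eq {φ : ℝ → ℂ}
    (hφ : IntervalIntegrable φ volume 0 (2 * π)) {z : ℂ}
    (hz : ‖z‖ < 1) : conjPoissonIntR φ z = (-I/2) * Sch φ z +
      (I/2) * (starRingEnd ℂ) (Sch (fun t => (starRingEnd ℂ) (φ t)) z) := by
  rw [Sch_comb hφ hz, conjPoissonIntR]
  congr 2
  ext t
  congr 1
  rw [← hker_im, Complex.im_eq_sub_conj]
  have : (I:ℂ) ≠ 0 := I_ne_zero
  field_simp
  rw [I_sq]; ring

lemma fderiv_comb {A B : ℂ → ℂ} {A' B' a b z : ℂ} (hA : HasDerivAt A A' z) (hB : HasDerivAt B B' z)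
    : HasFDerivAt (𝕜 := ℝ) (fun w => a * A w + b * (starRingEnd ℂ) (B w))
      (a • ((ContinuousLinearMap.toSpanSingleton ℂ A').restrictScalars ℝ) +
       b • ((Complex.conjCLE : ℂ →L[ℝ] ℂ).comp ((ContinuousLinearMap.toSpanSingleton ℂ B').restrictScalars ℝ))) z := by
  have h1 := (hA.hasFDerivAt.restrictScalars ℝ).const_smul a
  have h2 := ((Complex.conjCLE.hasFDerivAt (x := B z)).comp z (hB.hasFDerivAt.restrictScalars ℝ)).const_smul b
  exact h1.add h2

lemma fderiv_comb_apply {f A B : ℂ → ℂ} {A' B' a b z : ℂ} (hA : HasDerivAt A A' z)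
    (hB : HasDerivAt B B' z)
    (hf : f =ᶠ[𝓝 z] fun w => a * A w + b * (starRingEnd ℂ) (B w)) (v : ℂ) :
    fderiv ℝ f z v = a * (v * A') + b * (starRingEnd ℂ) (v * B') := by
  rw [hf.fderiv_eq, (fderiv_comb hA hB).fderiv]
  simp

lemma rFr_comb {f A B : ℂ → ℂ} {A' B' a b z : ℂ} (hA : HasDerivAt A A' z)
    (hB : HasDerivAt B B' z)
    (hf : f =ᶠ[𝓝 z] fun w => a * A w + b * (starRingEnd ℂ) (B w)) :
    rFr f z = a * (z * A') + b * (starRingEnd ℂ) (z * B') := by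
  rw [rFr, wdz, wdzb, fderiv_comb_apply hA hB hf, fderiv_comb_apply hA hB hf]
  simp only [map_mul, conj_I, map_one]
  linear_combination (-z * a * A'/2 + z * b * (starRingEnd ℂ) B'/2 + (starRingEnd ℂ) z * a * A'/2 - (starRingEnd ℂ) z * b * (starRingEnd ℂ) B'/2) * I_sq

lemma harmonic_comb {f A B : ℂ → ℂ} {a b : ℂ} (hA : DifferentiableOn ℂ A (ball 0 1))
    (hB : DifferentiableOn ℂ B (ball 0 1))
    (hf : ∀ z ∈ ball (0:ℂ) 1, f z = a * A z + b * (starRingEnd ℂ) (B z)) : HarmonicOnD f := by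
  have ev : ∀ z ∈ ball (0:ℂ) 1, f =ᶠ[𝓝 z] fun w => a * A w + b * (starRingEnd ℂ) (B w) :=
    fun z hz => by filter_upwards [isOpen_ball.mem_nhds hz] with w hw using hf w hw
  have hd : ∀ {A : ℂ → ℂ}, DifferentiableOn ℂ A (ball 0 1) → ∀ z ∈ ball (0:ℂ) 1,
      HasDerivAt A (deriv A z) z := fun h z hz => (h.differentiableAt (isOpen_ball.mem_nhds hz)).hasDerivAt
  have hA2 := hA.deriv isOpen_ball
  have hB2 := hB.deriv isOpen_ball
  constructor
  · have h1 : ContDiffOn ℝ 2 A (ball 0 1) := (hA.contDiffOn isOpen_ball).restrict_scalars ℝ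
    have h2 : ContDiffOn ℝ 2 B (ball 0 1) := (hB.contDiffOn isOpen_ball).restrict_scalars ℝ
    have h3 : ContDiffOn ℝ 2 (fun w => a * A w + b * (starRingEnd ℂ) (B w)) (ball 0 1) :=
      (contDiffOn_const.mul h1).add (contDiffOn_const.mul (Complex.conjCLE.contDiff.comp_contDiffOn h2))
    exact h3.congr hf
  · intro z hz
    have key : ∀ v : ℂ, fderiv ℝ (fun w => fderiv ℝ f w v) z v =
       a * (v * v * deriv (deriv A) z) + b * (starRingEnd ℂ) (v * v * deriv (deriv B) z) := by
      intro v
      rw [fderiv_comb_apply (A := deriv A) (B := deriv B) (a := a * v) (b := b * (starRingEnd ℂ) v)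
        (hd hA2 z hz) (hd hB2 z hz)]
      · simp only [map_mul]; ring
      · filter_upwards [isOpen_ball.mem_nhds hz] with w hw
        rw [fderiv_comb_apply (hd hA w hw) (hd hB w hw) (ev w hw)]
        simp only [map_mul]; ring
    rw [key, key]
    simp
    ring

lemma AC_cont {F : ℂ → ℂ} {Fd : ℝ → ℂ} (hF : IsACDeriv F Fd) :
    Continuous (fun t : ℝ => F (cexp (t * I))) := by
  have : (fun t : ℝ => F (cexp (t * I))) = fun t => F 1 + ∫ s in (0:ℝ)..t, Fd s := by
    ext t; exact hF.2.2 t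
  rw [this]
  exact continuous_const.add (intervalIntegral.continuous_primitive hF.1 0)

lemma AC_zero {F : ℂ → ℂ} {Fd : ℝ → ℂ} (hF : IsACDeriv F Fd) :
    ∫ s in (0:ℝ)..(2 * π), Fd s = 0 := by
  have := hF.2.2 (2 * π)
  push_cast at this
  rw [Complex.exp_two_pi_mul_I] at this
  simpa using this.symm

lemma AC_conj {F : ℂ → ℂ} {Fd : ℝ → ℂ} (hF : IsACDeriv F Fd) :
    IsACDeriv (fun z => (starRingEnd ℂ) (F z)) (fun t => (starRingEnd ℂ) (Fd t)) := by
  refine ⟨fun a b => ivi_conj (hF.1 a b), fun t => by simp only [hF.2.1 t], fun t => ?_⟩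
  simp only
  rw [hF.2.2 t, map_add, conj_int]

lemma hker_hasDerivAt {z : ℂ} (hz : ‖z‖ < 1) (t : ℝ) :
    HasDerivAt (hker z) (-I * (z * (2 * cexp (t * I) / (cexp (t * I) - z) ^ 2))) t := by
  have h0 : HasDerivAt (fun t : ℝ => cexp (t * I)) (cexp (t * I) * I) t := by
    have := ((hasDerivAt_id (t:ℂ)).mul_const I).cexp.comp_ofReal
    simpa using this
  have := (h0.add_const z).div (h0.sub_const z) (exp_sub_ne hz t)
  have e : -I * (z * (2 * cexp (t * I) / (cexp (t * I) - z) ^ 2)) =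
      (cexp (t * I) * I * (cexp (t * I) - z) - (cexp (t * I) + z) * (cexp (t * I) * I)) /
        (cexp (t * I) - z) ^ 2 := by
    rw [← mul_div_assoc, ← mul_div_assoc]
    congr 1
    ring
  rw [e]
  exact this

lemma Sch_parts {F : ℂ → ℂ} {Fd : ℝ → ℂ} (hF : IsACDeriv F Fd) {z : ℂ} (hz : ‖z‖ < 1) :
    z * ((1 / (2 * π)) * ∫ t in (0:ℝ)..(2 * π), (2 * cexp (t * I) / (cexp (t * I) - z) ^ 2) *
      F (cexp (t * I))) = -I * Sch Fd z := by
  set κ' : ℝ → ℂ := fun t => -I * (z * (2 * cexp (t * I) / (cexp (t * I) - z) ^ 2)) with hκ'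
  have hc : Continuous κ' := by
    refine continuous_const.mul (continuous_const.mul (Continuous.div (by fun_prop) (by fun_prop) ?_))
    exact fun t => pow_ne_zero _ (exp_sub_ne hz t)
  have hpi : (0:ℝ) ≤ 2 * π := by positivity
  have h1 : ∫ t in (0:ℝ)..(2 * π), κ' t * ∫ s in (0:ℝ)..t, Fd s = ∫ s in (0:ℝ)..(2 * π), (hker z (2 * π) - hker z s) * Fd s := parts hpi (hker_hasDerivAt hz) hc (hF.1 0 (2 * π))
  have hper : hker z (2 * π) = hker z 0 := by
    simp [hker, Complex.exp_two_pi_mul_I]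
  have h2 : ∫ t in (0:ℝ)..(2 * π), κ' t = 0 := by
    rw [intervalIntegral.integral_eq_sub_of_hasDerivAt (fun t _ => hker_hasDerivAt hz t)
      (hc.intervalIntegrable _ _), hper, sub_self]
  have h3 : ∫ t in (0:ℝ)..(2 * π), κ' t * F (cexp (t * I)) =
      - ∫ t in (0:ℝ)..(2 * π), hker z t * Fd t := by
    have e : ∀ t : ℝ, κ' t * F (cexp (t * I)) = κ' t * F 1 + κ' t * ∫ s in (0:ℝ)..t, Fd s := by
      intro t; rw [hF.2.2 t]; ring
    have hcp := intervalIntegral.continuous_primitive hF.1 0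
    simp_rw [e]
    have i1 : IntervalIntegrable (fun t => κ' t * F 1) volume 0 (2 * π) :=
      (hc.mul continuous_const).intervalIntegrable _ _
    have i2 : IntervalIntegrable (fun t => κ' t * ∫ s in (0:ℝ)..t, Fd s) volume 0 (2 * π) :=
      (hc.mul hcp).intervalIntegrable _ _
    rw [intervalIntegral.integral_add i1 i2, h1, intervalIntegral.integral_mul_const, h2]
    simp_rw [sub_mul]
    rw [intervalIntegral.integral_sub ((hF.1 _ _).const_mul _)
      ((hF.1 _ _).continuousOn_mul (hker_cont hz).continuousOn),
      intervalIntegral.integral_const_mul, AC_zero hF]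
    simp
  have h4 : ∀ t : ℝ, κ' t * F (cexp (t * I)) =
     (-I * z) * ((2 * cexp (t * I) / (cexp (t * I) - z) ^ 2) * F (cexp (t * I))) := by
    intro t; rw [hκ']; ring
  simp_rw [h4] at h3
  rw [intervalIntegral.integral_const_mul] at h3
  rw [Sch]
  generalize (∫ t in (0:ℝ)..(2 * π), (2 * cexp (t * I) / (cexp (t * I) - z) ^ 2) *
      F (cexp (t * I))) = X at h3 ⊢
  linear_combination (1 / (2 * π)) * I * h3 + (1 / (2 * π)) * z * X * I_sq

lemma rFr_eq {F : ℂ → ℂ} {Fd : ℝ → ℂ} (hF : IsACDeriv F Fd) {z : ℂ} (hz : ‖z‖ < 1) :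
    rFr (poissonInt F) z = conjPoissonIntR Fd z := by
  have hi : IntervalIntegrable (fun t : ℝ => F (cexp (t * I))) volume 0 (2 * π) :=
    (AC_cont hF).intervalIntegrable _ _
  have hzb : z ∈ ball (0:ℂ) 1 := by simpa using hz
  rw [rFr_comb (Sch_hasDerivAt hi hz) (Sch_hasDerivAt (ivi_conj hi) hz) (a := 1/2) (b := 1/2),
    Sch_parts hF hz, Sch_parts (AC_conj hF) hz, conjPoissonIntR_eq (hF.1 _ _) hz]
  · simp; ring
  · filter_upwards [isOpen_ball.mem_nhds hzb] with w hw
    exact poissonInt_eq hi (by simpa using hw)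

lemma rFr_harm {F : ℂ → ℂ} {Fd : ℝ → ℂ} (hF : IsACDeriv F Fd) : HarmonicOnD (rFr (poissonInt F)) := by
  refine harmonic_comb (Sch_diff (hF.1 _ _)) (Sch_diff (ivi_conj (hF.1 _ _))) (a := -I/2) (b := I/2) ?_
  intro z hz
  have hz : ‖z‖ < 1 := by simpa using hz
  rw [rFr_eq hF hz, conjPoissonIntR_eq (hF.1 _ _) hz]


/-- Conjugate Poisson kernel in angular form. -/
def qk (r x : ℝ) : ℝ := 2 * r * Real.sin x / ((1 - r) ^ 2 + 2 * r * (1 - Real.cos x))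

lemma conjKer_eq (r x : ℝ) : conjPoissonKer ((r : ℂ) * cexp (x * I)) = qk r x := by
  unfold conjPoissonKer qk
  rw [Complex.exp_mul_I, ← Complex.ofReal_cos, ← Complex.ofReal_sin, Complex.div_im]
  have hn : Complex.normSq (1 - (r : ℂ) * ((Real.cos x : ℂ) + (Real.sin x : ℂ) * I)) =
     (1 - r) ^ 2 + 2 * r * (1 - Real.cos x) := by
    rw [Complex.normSq_apply]
    simp only [sub_re, sub_im, one_re, one_im, mul_re, mul_im, add_re, add_im, ofReal_re, ofReal_im, I_re, I_im]
    linear_combination r ^ 2 * Real.sin_sq_add_cos_sq x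
  rw [hn]
  simp only [sub_re, sub_im, one_re, one_im, mul_re, mul_im, add_re, add_im, ofReal_re, ofReal_im, I_re, I_im]
  ring

/-- The difference kernel. -/
def dk (r x : ℝ) : ℝ := qk r x - if |x| < 1 - r then 0 else 1 / Real.tan (x / 2)

lemma qk_odd (r x : ℝ) : qk r (-x) = - qk r x := by
  unfold qk; simp [Real.sin_neg, Real.cos_neg]; ring

lemma dk_odd (r x : ℝ) : dk r (-x) = - dk r x := by
  unfold dk; rw [qk_odd, abs_neg, neg_div, Real.tan_neg]
  split_ifs <;> simp; ring

lemma qk_den_pos {r : ℝ} (h0 : 0 < r) (h1 : r < 1) (x : ℝ) :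
    0 < (1 - r) ^ 2 + 2 * r * (1 - Real.cos x) := by
  have := Real.cos_le_one x
  have : 0 < (1 - r) ^ 2 := pow_pos (by linarith) 2
  nlinarith

lemma qk_cont {r : ℝ} (h0 : 0 < r) (h1 : r < 1) : Continuous (qk r) := by
  unfold qk
  exact Continuous.div (by fun_prop) (by fun_prop) (fun x => (qk_den_pos h0 h1 x).ne')

lemma dk_small {r x : ℝ} (h0 : 0 < r) (h1 : r < 1) (hx : |x| < 1 - r) :
    |dk r x| ≤ 10 / (1 - r) := by
  have hd := qk_den_pos h0 h1 x
  have hδ : 0 < 1 - r := by linarith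
  rw [dk, if_pos hx, sub_zero, qk, abs_div, abs_of_pos hd, div_le_div_iff₀ hd hδ, abs_mul,
    abs_of_pos (by linarith : 0 < 2 * r)]
  have h2 : |Real.sin x| ≤ 1 - r := (Real.abs_sin_le_abs).trans hx.le
  have h3 := Real.cos_le_one x
  have h4 : 2 * r * |Real.sin x| * (1 - r) ≤ 2 * 1 * (1 - r) * (1 - r) := by gcongr
  nlinarith [mul_nonneg h0.le (sub_nonneg.2 h3)]

lemma cot_bound {x : ℝ} (hx0 : x ≠ 0) (hx : |x| < π) : |1 / Real.tan (x / 2)| ≤ 2 / |x| := by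
  have key : ∀ y : ℝ, 0 < y → y < π → |1 / Real.tan (y / 2)| ≤ 2 / y := by
    intro y h1 h2
    have := Real.lt_tan (by linarith : 0 < y / 2) (by linarith)
    rw [abs_of_pos (by apply one_div_pos.2; linarith), div_le_div_iff₀ (by linarith) h1]
    linarith
  rcases lt_or_gt_of_ne hx0 with h | h
  · have := key (-x) (by linarith) (by rwa [abs_of_neg h] at hx)
    rw [abs_of_neg h]
    rwa [neg_div, Real.tan_neg, div_neg, abs_neg] at this
  · rw [abs_of_pos h] at hx ⊢
    exact key x h hx

lemma dk_large {r x : ℝ} (h0 : 1 / 2 ≤ r) (h1 : r < 1) (hx : ¬ |x| < 1 - r) (hπ : |x| < π) :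
    |dk r x| ≤ 10 * (1 - r) / x ^ 2 := by
  have hr : 0 < r := by linarith
  have hd := qk_den_pos hr h1 x
  have hδ : 0 < 1 - r := by linarith
  have hx' : 1 - r ≤ |x| := not_lt.1 hx
  have hxp : 0 < |x| := by linarith
  have hx0 : x ≠ 0 := abs_pos.1 hxp
  have hcos := Real.cos_le_one_sub_mul_cos_sq hπ.le
  have hlow : x ^ 2 / 5 ≤ 1 - Real.cos x := by
    have : (1:ℝ)/5 ≤ 2 / π ^ 2 := by
      rw [div_le_div_iff₀ (by norm_num) (by positivity)]
      nlinarith [Real.pi_lt_d2, Real.pi_pos]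
    nlinarith [sq_nonneg x]
  have hcp : 0 < 1 - Real.cos x := by have : 0 < x ^ 2 := by positivity
                                      linarith
  have hcot : 1 / Real.tan (x / 2) = Real.sin x / (1 - Real.cos x) := by
    have hs : Real.sin x = 2 * Real.sin (x / 2) * Real.cos (x / 2) := by
      rw [← Real.sin_two_mul]; ring_nf
    have hc : 1 - Real.cos x = 2 * Real.sin (x / 2) ^ 2 := by
      have : Real.cos x = 2 * Real.cos (x / 2) ^ 2 - 1 := by rw [← Real.cos_two_mul]; ring_nf
      have := Real.sin_sq_add_cos_sq (x / 2)
      linarith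
    have hsn : Real.sin (x / 2) ≠ 0 := by
      intro h; rw [h] at hc; norm_num at hc; linarith
    rw [hs, hc, Real.tan_eq_sin_div_cos, one_div_div]
    field_simp
  have hD : dk r x = - (1 / Real.tan (x / 2)) * ((1 - r) ^ 2 / ((1 - r) ^ 2 + 2 * r * (1 - Real.cos x))) := by
    rw [dk, if_neg hx, hcot, qk]
    field_simp
    ring
  rw [hD, abs_mul, abs_neg, abs_of_nonneg (by positivity : 0 ≤ (1 - r) ^ 2 / ((1 - r) ^ 2 + 2 * r * (1 - Real.cos x)))]
  have h5 : (1 - r) ^ 2 / ((1 - r) ^ 2 + 2 * r * (1 - Real.cos x)) ≤ (1 - r) ^ 2 / (x ^ 2 / 5) := by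
    apply div_le_div_of_nonneg_left (by positivity) (by positivity)
    nlinarith
  calc _ ≤ 2 / |x| * ((1 - r) ^ 2 / (x ^ 2 / 5)) := by
        gcongr
        exact cot_bound hx0 hπ
    _ = 10 * (1 - r) / x ^ 2 * ((1 - r) / |x|) := by field_simp; ring
    _ ≤ 10 * (1 - r) / x ^ 2 * 1 := by
        gcongr
        rwa [div_le_one hxp]
    _ = _ := mul_one _

lemma dk_meas (r : ℝ) : Measurable (dk r) := by
  unfold dk qk
  refine Measurable.sub (by fun_prop) (Measurable.ite ?_ measurable_const ?_)
  · exact measurableSet_lt (by fun_prop) measurable_const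
  · simp_rw [Real.tan_eq_sin_div_cos]
    fun_prop

lemma dk_bdd {r x : ℝ} (h0 : 1 / 2 ≤ r) (h1 : r < 1) (hπ : |x| < π) : |dk r x| ≤ 10 / (1 - r) := by
  by_cases h : |x| < 1 - r
  · exact dk_small (by linarith) h1 h
  · refine (dk_large h0 h1 h hπ).trans ?_
    have hδ : 0 < 1 - r := by linarith
    have : (1 - r) ^ 2 ≤ x ^ 2 := by
      rw [← sq_abs x]; have := not_lt.1 h; gcongr
    rw [div_le_div_iff₀ (by nlinarith) hδ]
    nlinarith

/-- dyadic domination -/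
lemma dk_dyadic {r x : ℝ} (h0 : 1 / 2 ≤ r) (h1 : r < 1) (hπ : |x| < π) :
    ∃ k : ℕ, |x| ≤ 2 ^ k * (1 - r) ∧ |dk r x| ≤ 40 / ((1 - r) * 4 ^ k) := by
  have hδ : 0 < 1 - r := by linarith
  by_cases h : |x| < 1 - r
  · refine ⟨0, by simpa using h.le, (dk_small (by linarith) h1 h).trans ?_⟩
    rw [pow_zero, mul_one]
    gcongr
    norm_num
  · have hx := not_lt.1 h
    obtain ⟨n, hn1, hn2⟩ := exists_nat_pow_near (x := |x| / (1 - r)) (y := 2) (by rwa [one_le_div hδ])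
      (by norm_num)
    rw [le_div_iff₀ hδ] at hn1
    rw [div_lt_iff₀ hδ] at hn2
    refine ⟨n + 1, hn2.le, (dk_large h0 h1 h hπ).trans ?_⟩
    have h4 : 4 ^ n * (1 - r) ^ 2 ≤ x ^ 2 := by
      rw [← sq_abs x]
      calc (4:ℝ) ^ n * (1 - r) ^ 2 = (2 ^ n * (1 - r)) ^ 2 := by
            rw [mul_pow, ← pow_mul, mul_comm n 2, pow_mul]; norm_num
        _ ≤ _ := by gcongr
    have h5 : 0 < 4 ^ n * (1 - r) ^ 2 := by positivity
    rw [div_le_div_iff₀ (by linarith) (by positivity), pow_succ]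
    nlinarith

/-- Tannery step -/
lemma tannery {a : ℝ → ℝ} {M : ℝ} (hM : ∀ x, 0 < x → ‖a x‖ ≤ M) (ha : Tendsto a (𝓝[>] 0) (𝓝 0)) :
    Tendsto (fun δ : ℝ => ∑' k : ℕ, 40 * (1 / 2 : ℝ) ^ k * a (2 ^ k * δ)) (𝓝[>] 0) (𝓝 0) := by
  have h := tendsto_tsum_of_dominated_convergence (𝓕 := 𝓝[>] (0:ℝ))
    (f := fun δ (k : ℕ) => 40 * (1 / 2 : ℝ) ^ k * a (2 ^ k * δ)) (g := fun _ => 0)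
    (bound := fun k => 40 * (1 / 2 : ℝ) ^ k * M) ?_ ?_ ?_
  · simpa using h
  · exact ((summable_geometric_two).mul_left 40).mul_right M
  · intro k
    have : Tendsto (fun δ : ℝ => 2 ^ k * δ) (𝓝[>] 0) (𝓝[>] 0) := by
      refine tendsto_nhdsWithin_iff.2 ⟨?_, ?_⟩
      · have : Tendsto (fun δ : ℝ => 2 ^ k * δ) (𝓝 0) (𝓝 (2 ^ k * 0)) := (continuous_const.mul continuous_id).tendsto 0
        rw [mul_zero] at this
        exact this.mono_left nhdsWithin_le_nhds
      · filter_upwards [self_mem_nhdsWithin] with δ hδ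
        have : 0 < δ := hδ
        simp only [mem_Ioi]; positivity
    simpa using (ha.comp this).const_mul (40 * (1 / 2 : ℝ) ^ k)
  · filter_upwards [self_mem_nhdsWithin] with δ hδ k
    have : 0 < δ := hδ
    rw [norm_mul]
    have h1 : ‖(40 * (1 / 2 : ℝ) ^ k)‖ = 40 * (1 / 2 : ℝ) ^ k := by
      rw [Real.norm_eq_abs, abs_of_nonneg (by positivity)]
    rw [h1]
    gcongr
    exact hM _ (by positivity)


lemma leb_conv {φ : ℝ → ℂ} {θ : ℝ} (hφ : ∀ a b : ℝ, IntervalIntegrable φ volume a b)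
    (hθ : Tendsto (fun δ : ℝ => ⨍ y in closedBall θ δ, ‖φ y - φ θ‖) (𝓝[>] 0) (𝓝 0)) :
    Tendsto (fun r : ℝ => ∫ t in Ioo (θ - π) (θ + π), (dk r (θ - t) : ℂ) * (φ t - φ θ))
      (𝓝[<] 1) (𝓝 0) := by
  set W := Ioo (θ - π) (θ + π) with hW
  set f : ℝ → ℝ := fun t => ‖φ t - φ θ‖ with hf
  have hfI : ∀ a b : ℝ, IntervalIntegrable f volume a b := fun a b =>
    ((hφ a b).sub intervalIntegrable_const).norm
  have hfW : IntegrableOn f W := by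
    have := (intervalIntegrable_iff_integrableOn_Ioo_of_le (by linarith [Real.pi_pos])).1 (hfI (θ - π) (θ + π))
    exact this
  have hfnn : ∀ t, 0 ≤ f t := fun t => norm_nonneg _
  set a : ℝ → ℝ := fun x => (∫ t in W ∩ closedBall θ x, f t) / x with ha
  have hann : ∀ x, 0 < x → 0 ≤ a x := fun x hx =>
    div_nonneg (integral_nonneg hfnn) hx.le
  have hfB : ∀ x, IntegrableOn f (closedBall θ x) := by
    intro x
    rw [Real.closedBall_eq_Icc]
    rcases le_or_gt (θ - x) (θ + x) with h | h
    · exact (intervalIntegrable_iff_integrableOn_Icc_of_le h).1 (hfI _ _)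
    · rw [Icc_eq_empty (by linarith)]; exact integrableOn_empty
  have hle : ∀ x, 0 < x → a x ≤ 2 * ⨍ y in closedBall θ x, f y := by
    intro x hx
    rw [setAverage_eq, Measure.real, Real.volume_closedBall, ENNReal.toReal_ofReal (by linarith), smul_eq_mul]
    have : ∫ t in W ∩ closedBall θ x, f t ≤ ∫ t in closedBall θ x, f t :=
      setIntegral_mono_set (hfB x) (Eventually.of_forall hfnn) (Eventually.of_forall inter_subset_right)
    have e : 2 * ((2 * x)⁻¹ * ∫ (x : ℝ) in closedBall θ x, f x) = (∫ (x : ℝ) in closedBall θ x, f x) / x := by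
      field_simp
    rw [e]
    simp only [ha]
    gcongr
  have ha0 : Tendsto a (𝓝[>] 0) (𝓝 0) := by
    refine tendsto_of_tendsto_of_tendsto_of_le_of_le' tendsto_const_nhds
      (by simpa using hθ.const_mul 2) ?_ ?_
    · filter_upwards [self_mem_nhdsWithin] with x hx using hann x hx
    · filter_upwards [self_mem_nhdsWithin] with x hx using hle x hx
  obtain ⟨M, hM⟩ : ∃ M, ∀ x, 0 < x → ‖a x‖ ≤ M := by
    have h1 : ∀ᶠ x in 𝓝[>] (0:ℝ), a x < 1 := ha0.eventually (gt_mem_nhds one_pos)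
    obtain ⟨x0, hx0, h2⟩ := mem_nhdsGT_iff_exists_Ioo_subset.1 h1
    have hx0 : 0 < x0 := hx0
    refine ⟨max 1 ((∫ t in W, f t) / x0), fun x hx => ?_⟩
    rw [Real.norm_eq_abs, abs_of_nonneg (hann x hx)]
    rcases lt_or_ge x x0 with h | h
    · exact le_max_of_le_left (le_of_lt (h2 ⟨hx, h⟩))
    · apply le_max_of_le_right
      have : ∫ t in W ∩ closedBall θ x, f t ≤ ∫ t in W, f t :=
        setIntegral_mono_set hfW (Eventually.of_forall hfnn) (Eventually.of_forall inter_subset_left)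
      have h3 : 0 ≤ ∫ t in W, f t := integral_nonneg hfnn
      simp only [ha]
      gcongr
  have hlim := tannery hM ha0
  have hr : Tendsto (fun r : ℝ => 1 - r) (𝓝[<] 1) (𝓝[>] 0) := by
    refine tendsto_nhdsWithin_iff.2 ⟨?_, ?_⟩
    · have : Tendsto (fun r : ℝ => 1 - r) (𝓝 1) (𝓝 (1 - 1)) := (continuous_const.sub continuous_id).tendsto 1
      rw [sub_self] at this
      exact this.mono_left nhdsWithin_le_nhds
    · filter_upwards [self_mem_nhdsWithin] with r hr
      have : r < 1 := hr
      simp only [mem_Ioi]; linarith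
  refine squeeze_zero_norm' ?_ (hlim.comp hr)
  have hev : ∀ᶠ r : ℝ in 𝓝[<] 1, 1 / 2 ≤ r :=
    mem_nhdsWithin_of_mem_nhds (Ici_mem_nhds (by norm_num))
  filter_upwards [self_mem_nhdsWithin, hev] with r hr1 hr2
  have hr1 : r < 1 := hr1
  have hδ : 0 < 1 - r := by linarith
  simp only [Function.comp]
  set δ := 1 - r with hδdef
  have hsum : Summable (fun k : ℕ => 40 * (1 / 2 : ℝ) ^ k * a (2 ^ k * δ)) := by
    refine Summable.of_nonneg_of_le (fun k => ?_) (fun k => ?_)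
      (((summable_geometric_two).mul_left 40).mul_right M)
    · have := hann (2 ^ k * δ) (by positivity)
      positivity
    · have := hM (2 ^ k * δ) (by positivity)
      gcongr
      exact (le_abs_self _).trans this
  have hnn : ∀ k : ℕ, 0 ≤ 40 * (1 / 2 : ℝ) ^ k * a (2 ^ k * δ) := fun k => by
    have := hann (2 ^ k * δ) (by positivity)
    positivity
  have hmain : ‖∫ t in W, (dk r (θ - t) : ℂ) * (φ t - φ θ)‖ₑ ≤
      ENNReal.ofReal (∑' k : ℕ, 40 * (1 / 2 : ℝ) ^ k * a (2 ^ k * δ)) := by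
    calc _ ≤ ∫⁻ t in W, ‖(dk r (θ - t) : ℂ) * (φ t - φ θ)‖ₑ := enorm_integral_le_lintegral_enorm _
      _ ≤ ∫⁻ t in W, ∑' k : ℕ, ENNReal.ofReal (40 / (δ * 4 ^ k)) *
            (closedBall θ (2 ^ k * δ)).indicator (fun t => ENNReal.ofReal (f t)) t := by
          apply setLIntegral_mono' measurableSet_Ioo
          intro t ht
          have hx : |θ - t| < π := by
            rw [abs_lt]; constructor <;> linarith [ht.1, ht.2]
          obtain ⟨k, hk1, hk2⟩ := dk_dyadic hr2 hr1 hx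
          refine le_trans ?_ (ENNReal.le_tsum k)
          have hmem : t ∈ closedBall θ (2 ^ k * δ) := by
            rw [mem_closedBall, dist_comm, Real.dist_eq]; exact hk1
          rw [indicator_of_mem hmem, enorm_mul, ← ofReal_norm, ← ofReal_norm,
            Complex.norm_real, Real.norm_eq_abs]
          gcongr
      _ = ∑' k : ℕ, ENNReal.ofReal (40 / (δ * 4 ^ k)) *
            ∫⁻ t in W, (closedBall θ (2 ^ k * δ)).indicator (fun t => ENNReal.ofReal (f t)) t := by
          have hm : AEMeasurable (fun t => ENNReal.ofReal (f t)) (volume.restrict W) :=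
            hfW.aestronglyMeasurable.aemeasurable.ennreal_ofReal
          rw [lintegral_tsum]
          · congr 1; ext k
            rw [lintegral_const_mul'' _ (hm.indicator measurableSet_closedBall)]
          · intro k
            exact (hm.indicator measurableSet_closedBall).const_mul _
      _ = ∑' k : ℕ, ENNReal.ofReal (40 * (1 / 2 : ℝ) ^ k * a (2 ^ k * δ)) := by
          congr 1; ext k
          rw [lintegral_indicator measurableSet_closedBall, Measure.restrict_restrict measurableSet_closedBall,
            inter_comm, ← ofReal_integral_eq_lintegral_ofReal (hfW.mono_set inter_subset_left)
              (Eventually.of_forall hfnn), ← ENNReal.ofReal_mul (by positivity)]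
          congr 1
          simp only [ha]
          have : (4:ℝ) ^ k = 2 ^ k * 2 ^ k := by rw [← mul_pow]; norm_num
          rw [this, one_div, inv_pow]
          field_simp
      _ = _ := (ENNReal.ofReal_tsum_of_nonneg hnn hsum).symm
  rw [← ofReal_norm] at hmain
  exact (ENNReal.ofReal_le_ofReal_iff (tsum_nonneg hnn)).1 hmain

lemma dk_int_zero (r θ : ℝ) : ∫ t in Ioo (θ - π) (θ + π), (dk r (θ - t) : ℂ) = 0 := by
  rw [← integral_Ioc_eq_integral_Ioo, ← intervalIntegral.integral_of_le (by linarith [Real.pi_pos]),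
    intervalIntegral.integral_comp_sub_left (fun x => (dk r x : ℂ))]
  have h : ∫ x in (-π)..π, (dk r x : ℂ) = - ∫ x in (-π)..π, (dk r x : ℂ) := by
    conv_lhs => rw [← neg_neg π, ← intervalIntegral.integral_comp_neg]
    rw [← intervalIntegral.integral_neg]
    simp [dk_odd]
  have e1 : θ - (θ + π) = -π := by ring
  have e2 : θ - (θ - π) = π := by ring
  rw [e1, e2]
  have := add_self_eq_zero.1 (eq_neg_iff_add_eq_zero.1 h)
  exact this

lemma conj_window {φ : ℝ → ℂ} (hp : Function.Periodic φ (2 * π)) (r θ : ℝ) :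
    conjPoissonIntR φ ((r : ℂ) * cexp (θ * I)) =
      (1 / (2 * π)) * ∫ t in Ioo (θ - π) (θ + π), (qk r (θ - t) : ℂ) * φ t := by
  have hk : ∀ t : ℝ, conjPoissonKer ((r : ℂ) * cexp (θ * I) * cexp (-(t : ℂ) * I)) = qk r (θ - t) := by
    intro t
    rw [mul_assoc, ← Complex.exp_add, ← conjKer_eq]
    congr 3
    push_cast; ring
  unfold conjPoissonIntR
  simp_rw [hk]
  have hper : Function.Periodic (fun t => (qk r (θ - t) : ℂ) * φ t) (2 * π) := by
    intro t
    simp only [hp t]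
    congr 2
    unfold qk
    rw [← sub_sub, Real.sin_sub_two_pi, Real.cos_sub_two_pi]
  have := hper.intervalIntegral_add_eq 0 (θ - π)
  rw [zero_add] at this
  rw [this, ← integral_Ioc_eq_integral_Ioo, intervalIntegral.integral_of_le (by linarith [Real.pi_pos])]
  congr 4
  ring

lemma radial {φ : ℝ → ℂ} (hφ : ∀ a b : ℝ, IntervalIntegrable φ volume a b)
    (hp : Function.Periodic φ (2 * π)) : ∀ᵐ θ : ℝ, ∀ L : ℂ, IsPVHilbert φ θ L →
    Tendsto (fun r : ℝ => conjPoissonIntR φ ((r : ℂ) * cexp (θ * I))) (𝓝[<] 1) (𝓝 L) := by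
  have hloc : LocallyIntegrable φ volume := by
    intro x
    refine ⟨Icc (x - 1) (x + 1), Icc_mem_nhds (by linarith) (by linarith), ?_⟩
    exact (intervalIntegrable_iff_integrableOn_Icc_of_le (by linarith)).1 (hφ _ _)
  filter_upwards [IsUnifLocDoublingMeasure.ae_tendsto_average_norm_sub volume hloc 1] with θ hθ L hL
  have h1 := hθ (l := 𝓝[>] (0:ℝ)) (fun _ => θ) id tendsto_id (by
    filter_upwards [self_mem_nhdsWithin] with δ hδ
    have : (0:ℝ) < δ := hδ
    simp [this.le])
  have h2 := leb_conv hφ h1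
  have hr : Tendsto (fun r : ℝ => 1 - r) (𝓝[<] 1) (𝓝[>] 0) := by
    refine tendsto_nhdsWithin_iff.2 ⟨?_, ?_⟩
    · have : Tendsto (fun r : ℝ => 1 - r) (𝓝 1) (𝓝 (1 - 1)) := (continuous_const.sub continuous_id).tendsto 1
      rw [sub_self] at this
      exact this.mono_left nhdsWithin_le_nhds
    · filter_upwards [self_mem_nhdsWithin] with r hr
      have : r < 1 := hr
      simp only [mem_Ioi]; linarith
  have h3 := (hL.comp hr).add (h2.const_mul (1 / (2 * π) : ℂ))
  rw [mul_zero, add_zero] at h3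
  refine h3.congr' ?_
  have hev : ∀ᶠ r : ℝ in 𝓝[<] 1, 1 / 2 ≤ r :=
    mem_nhdsWithin_of_mem_nhds (Ici_mem_nhds (by norm_num))
  filter_upwards [self_mem_nhdsWithin, hev] with r hr1 hr2
  have hr1 : r < 1 := hr1
  have hr0 : 0 < r := by linarith
  have hδ : 0 < 1 - r := by linarith
  rw [conj_window hp]
  simp only [Function.comp]
  rw [← mul_add]
  congr 1
  set W := Ioo (θ - π) (θ + π) with hW
  have hφW : IntegrableOn φ W :=
    (intervalIntegrable_iff_integrableOn_Ioo_of_le (by linarith [Real.pi_pos])).1 (hφ (θ - π) (θ + π))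
  have hdm : AEStronglyMeasurable (fun t => (dk r (θ - t) : ℂ)) (volume.restrict W) :=
    (Complex.measurable_ofReal.comp ((dk_meas r).comp (measurable_const.sub measurable_id))).aestronglyMeasurable
  have hdb : ∀ᵐ t ∂(volume.restrict W), ‖(dk r (θ - t) : ℂ)‖ ≤ 10 / (1 - r) := by
    filter_upwards [ae_restrict_mem measurableSet_Ioo] with t ht
    rw [Complex.norm_real, Real.norm_eq_abs]
    apply dk_bdd hr2 hr1
    rw [abs_lt]; constructor <;> linarith [ht.1, ht.2]
  have hcW : IntegrableOn (fun _ : ℝ => φ θ) W := integrableOn_const (by simp [hW])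
  have i1 : IntegrableOn (fun t => (dk r (θ - t) : ℂ) * φ t) W := hφW.bdd_mul hdm hdb
  have i2 : IntegrableOn (fun t => (dk r (θ - t) : ℂ) * φ θ) W := hcW.bdd_mul hdm hdb
  have i3 : IntegrableOn (fun t => (qk r (θ - t) : ℂ) * φ t) W := by
    have : IntegrableOn (fun t => (qk r (θ - t) : ℂ) * φ t) (Ioo (θ - π) (θ + π)) := by
      rw [← intervalIntegrable_iff_integrableOn_Ioo_of_le (by linarith [Real.pi_pos])]
      apply (hφ _ _).continuousOn_mul
      exact (Complex.continuous_ofReal.comp ((qk_cont hr0 hr1).comp (by fun_prop))).continuousOn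
    exact this
  have e1 : ∫ t in W, (dk r (θ - t) : ℂ) * (φ t - φ θ) = ∫ t in W, (dk r (θ - t) : ℂ) * φ t := by
    simp_rw [mul_sub]
    rw [integral_sub i1 i2, integral_mul_const, dk_int_zero]; simp
  have e2 : ∫ t in W \ Ioo (θ - (1 - r)) (θ + (1 - r)), φ t / (Real.tan ((θ - t) / 2) : ℂ) =
      ∫ t in W, ((qk r (θ - t) : ℂ) * φ t - (dk r (θ - t) : ℂ) * φ t) := by
    rw [← integral_indicator (measurableSet_Ioo.diff measurableSet_Ioo),
      ← integral_indicator measurableSet_Ioo]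
    congr 1
    ext t
    by_cases hw : t ∈ W
    · by_cases ht : t ∈ Ioo (θ - (1 - r)) (θ + (1 - r))
      · have : |θ - t| < 1 - r := by rw [abs_lt]; constructor <;> linarith [ht.1, ht.2]
        rw [indicator_of_notMem (by simp [ht]), indicator_of_mem hw, dk, if_pos this]
        simp
      · have : ¬ |θ - t| < 1 - r := by
          intro h; rw [abs_lt] at h; exact ht ⟨by linarith, by linarith⟩
        have hm : t ∈ W \ Ioo (θ - (1 - r)) (θ + (1 - r)) := ⟨hw, ht⟩
        rw [indicator_of_mem hm, indicator_of_mem hw, dk, if_neg this]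
        push_cast
        ring
    · rw [indicator_of_notMem (fun h => hw h.1), indicator_of_notMem hw]
  rw [e1, e2, integral_sub i3 i1, sub_add_cancel]


/-- Poisson integral of a real function. -/
def PI (m : ℝ → ℝ) (z : ℂ) : ℝ := (1 / (2 * π)) * ∫ t in (0:ℝ)..(2 * π), (hker z t).re * m t

lemma ivi_ofReal {m : ℝ → ℝ} {a b : ℝ} (h : IntervalIntegrable m volume a b) :
    IntervalIntegrable (fun t => (m t : ℂ)) volume a b := ⟨h.1.ofReal, h.2.ofReal⟩

lemma re_const_mul (X : ℂ) : ((1 / (2 * π)) * X : ℂ).re = (1 / (2 * π)) * X.re := by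
  have : (1 / (2 * π) : ℂ) = ((1 / (2 * π) : ℝ) : ℂ) := by push_cast; ring
  rw [this, Complex.re_ofReal_mul]

lemma im_const_mul (X : ℂ) : ((1 / (2 * π)) * X : ℂ).im = (1 / (2 * π)) * X.im := by
  have : (1 / (2 * π) : ℂ) = ((1 / (2 * π) : ℝ) : ℂ) := by push_cast; ring
  rw [this, Complex.im_ofReal_mul]

lemma int_re {f : ℝ → ℂ} {a b : ℝ} (h : IntervalIntegrable f volume a b) :
    (∫ t in a..b, f t).re = ∫ t in a..b, (f t).re :=
  (Complex.reCLM.intervalIntegral_comp_comm h).symm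

lemma int_im {f : ℝ → ℂ} {a b : ℝ} (h : IntervalIntegrable f volume a b) :
    (∫ t in a..b, f t).im = ∫ t in a..b, (f t).im :=
  (Complex.imCLM.intervalIntegral_comp_comm h).symm

lemma ivi_hker {φ : ℝ → ℂ} (hφ : IntervalIntegrable φ volume 0 (2 * π)) {z : ℂ} (hz : ‖z‖ < 1) :
    IntervalIntegrable (fun t => hker z t * φ t) volume 0 (2 * π) :=
  hφ.continuousOn_mul (hker_cont hz).continuousOn

lemma hker_re_cont {z : ℂ} (hz : ‖z‖ < 1) : Continuous (fun t => (hker z t).re) :=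
  Complex.continuous_re.comp (hker_cont hz)

lemma hker_im_cont {z : ℂ} (hz : ‖z‖ < 1) : Continuous (fun t => (hker z t).im) :=
  Complex.continuous_im.comp (hker_cont hz)

lemma ivi_hker_re {m : ℝ → ℝ} (hm : IntervalIntegrable m volume 0 (2 * π)) {z : ℂ} (hz : ‖z‖ < 1) :
    IntervalIntegrable (fun t => (hker z t).re * m t) volume 0 (2 * π) :=
  hm.continuousOn_mul (hker_re_cont hz).continuousOn

lemma Sch_re {m : ℝ → ℝ} (hm : IntervalIntegrable m volume 0 (2 * π)) {z : ℂ} (hz : ‖z‖ < 1) :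
    (Sch (fun t => (m t : ℂ)) z).re = PI m z := by
  rw [Sch, PI, re_const_mul, int_re (ivi_hker (ivi_ofReal hm) hz)]
  simp

lemma Sch_im {m : ℝ → ℝ} (hm : IntervalIntegrable m volume 0 (2 * π)) {z : ℂ} (hz : ‖z‖ < 1) :
    (Sch (fun t => (m t : ℂ)) z).im =
      (1 / (2 * π)) * ∫ t in (0:ℝ)..(2 * π), (hker z t).im * m t := by
  rw [Sch, im_const_mul, int_im (ivi_hker (ivi_ofReal hm) hz)]
  simp

lemma conj_re {φ : ℝ → ℂ} (hφ : IntervalIntegrable φ volume 0 (2 * π)) {z : ℂ} (hz : ‖z‖ < 1) :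
    (conjPoissonIntR φ z).re = (Sch (fun t => ((φ t).re : ℂ)) z).im := by
  have h1 : IntervalIntegrable (fun t => (φ t).re) volume 0 (2 * π) := ⟨hφ.1.re, hφ.2.re⟩
  rw [Sch_im h1 hz, conjPoissonIntR, re_const_mul]
  simp_rw [← hker_im]
  rw [int_re]
  · simp
  · exact hφ.continuousOn_mul (Complex.continuous_ofReal.comp (hker_im_cont hz)).continuousOn

lemma conj_im {φ : ℝ → ℂ} (hφ : IntervalIntegrable φ volume 0 (2 * π)) {z : ℂ} (hz : ‖z‖ < 1) :
    (conjPoissonIntR φ z).im = (Sch (fun t => ((φ t).im : ℂ)) z).im := by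
  have h1 : IntervalIntegrable (fun t => (φ t).im) volume 0 (2 * π) := ⟨hφ.1.im, hφ.2.im⟩
  rw [Sch_im h1 hz, conjPoissonIntR, im_const_mul]
  simp_rw [← hker_im]
  rw [int_im]
  · simp
  · exact hφ.continuousOn_mul (Complex.continuous_ofReal.comp (hker_im_cont hz)).continuousOn

lemma twopi_nn : (0:ℝ) ≤ 2 * π := by positivity

lemma PI_mono_ae {m n : ℝ → ℝ} (hm : IntervalIntegrable m volume 0 (2 * π))
    (hn : IntervalIntegrable n volume 0 (2 * π)) {z : ℂ} (hz : ‖z‖ < 1)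
    (h : ∀ᵐ t ∂(volume.restrict (Icc 0 (2 * π))), m t ≤ n t) : PI m z ≤ PI n z := by
  unfold PI
  gcongr
  apply intervalIntegral.integral_mono_ae_restrict twopi_nn (ivi_hker_re hm hz) (ivi_hker_re hn hz)
  filter_upwards [h] with t ht
  exact mul_le_mul_of_nonneg_left ht (hker_re_nonneg hz t)

lemma PI_add {m n : ℝ → ℝ} (hm : IntervalIntegrable m volume 0 (2 * π))
    (hn : IntervalIntegrable n volume 0 (2 * π)) {z : ℂ} (hz : ‖z‖ < 1) :
    PI (fun t => m t + n t) z = PI m z + PI n z := by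
  unfold PI
  simp_rw [mul_add]
  rw [intervalIntegral.integral_add (ivi_hker_re hm hz) (ivi_hker_re hn hz)]
  ring

lemma PI_nonneg {m : ℝ → ℝ} (h : ∀ t, 0 ≤ m t) {z : ℂ} (hz : ‖z‖ < 1) : 0 ≤ PI m z := by
  unfold PI
  apply mul_nonneg (by positivity)
  apply intervalIntegral.integral_nonneg twopi_nn
  intro t _
  exact mul_nonneg (hker_re_nonneg hz t) (h t)

lemma norm_re_exp {r : ℝ} (h0 : 0 ≤ r) (t : ℝ) : ‖(r : ℂ) * cexp (t * I)‖ = r := by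
  rw [norm_mul, Complex.norm_exp_ofReal_mul_I, mul_one, Complex.norm_real, Real.norm_eq_abs,
    abs_of_nonneg h0]

lemma circ_cont {G : ℂ → ℂ} (hG : DifferentiableOn ℂ G (ball 0 1)) {r : ℝ} (h0 : 0 < r) (h1 : r < 1) :
    Continuous (fun t : ℝ => G ((r : ℂ) * cexp (t * I))) := by
  apply hG.continuousOn.comp_continuous (by fun_prop)
  intro t
  simp only [mem_ball, dist_zero_right]
  rw [norm_re_exp h0.le]; exact h1

/-- Poisson formula. -/
lemma poisson_formula {G : ℂ → ℂ} (hG : DifferentiableOn ℂ G (ball 0 1)) {r : ℝ} (h0 : 0 < r)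
    (h1 : r < 1) {z : ℂ} (hz : ‖z‖ < 1) : G (r * z) =
    (1 / (2 * π)) * ∫ t in (0:ℝ)..(2 * π), ((hker z t).re : ℂ) * G (r * cexp (t * I)) := by
  have hd : DifferentiableOn ℂ (fun w : ℂ => G (r * w)) (closure (ball 0 1)) := by
    rw [closure_ball (0:ℂ) one_ne_zero]
    apply hG.comp (by fun_prop)
    intro w hw
    simp only [mem_closedBall, dist_zero_right] at hw
    simp only [mem_ball, dist_zero_right, norm_mul, Complex.norm_real, Real.norm_eq_abs, abs_of_pos h0]
    nlinarith
  have := (hd.diffContOnCl).circleAverage_re_herglotzRieszKernel_smul (w := z) (by simpa using hz)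
  rw [← this, Real.circleAverage_def]
  simp [circleMap, herglotzRieszKernel, hker]

lemma poisson_re {m : ℝ → ℝ} (hm : IntervalIntegrable m volume 0 (2 * π)) {r : ℝ} (h0 : 0 < r)
    (h1 : r < 1) {z : ℂ} (hz : ‖z‖ < 1) : PI m (r * z) = PI (fun t => PI m (r * cexp (t * I))) z := by
  have hrz : ‖(r:ℂ) * z‖ < 1 := by
    rw [norm_mul, Complex.norm_real, Real.norm_eq_abs, abs_of_pos h0]
    nlinarith [norm_nonneg z]
  have hd := Sch_diff (ivi_ofReal hm)
  rw [← Sch_re hm hrz, poisson_formula hd h0 h1 hz, re_const_mul, PI, int_re]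
  · congr 1
    apply intervalIntegral.integral_congr
    intro t _
    simp only
    rw [Complex.re_ofReal_mul, Sch_re hm]
    rw [norm_re_exp h0.le]; exact h1
  · apply Continuous.intervalIntegrable
    exact (Complex.continuous_ofReal.comp (hker_re_cont hz)).mul (circ_cont hd h0 h1)

lemma poisson_norm {G : ℂ → ℂ} (hG : DifferentiableOn ℂ G (ball 0 1)) {r : ℝ} (h0 : 0 < r)
    (h1 : r < 1) {z : ℂ} (hz : ‖z‖ < 1) : ‖G (r * z)‖ ≤ PI (fun t => ‖G (r * cexp (t * I))‖) z := by
  have e : (1 / (2 * π) : ℂ) = ((1 / (2 * π) : ℝ) : ℂ) := by push_cast; ring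
  rw [poisson_formula hG h0 h1 hz, PI, norm_mul, e, Complex.norm_real, Real.norm_eq_abs,
    abs_of_pos (by positivity)]
  gcongr
  refine (intervalIntegral.norm_integral_le_integral_norm twopi_nn).trans (le_of_eq ?_)
  apply intervalIntegral.integral_congr
  intro t _
  simp only [norm_mul, Complex.norm_real, Real.norm_eq_abs, abs_of_nonneg (hker_re_nonneg hz t)]

lemma hker_zero (t : ℝ) : hker 0 t = 1 := by
  simp [hker]

lemma PI_one {z : ℂ} (hz : ‖z‖ < 1) : PI (fun _ => 1) z = 1 := by
  have := poisson_formula (G := fun _ => 1) (differentiableOn_const _) (r := 1/2) (by norm_num) (by norm_num) hz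
  have h2 := congrArg Complex.re this
  rw [re_const_mul, int_re] at h2
  · simp only [Complex.one_re] at h2
    rw [PI]
    refine Eq.trans ?_ h2.symm
    simp
  · apply Continuous.intervalIntegrable
    exact (Complex.continuous_ofReal.comp (hker_re_cont hz)).mul continuous_const

lemma Sch_add {φ χ : ℝ → ℂ} (hφ : IntervalIntegrable φ volume 0 (2 * π))
    (hχ : IntervalIntegrable χ volume 0 (2 * π)) {z : ℂ} (hz : ‖z‖ < 1) :
    Sch (fun t => φ t + χ t) z = Sch φ z + Sch χ z := by
  unfold Sch
  simp_rw [mul_add]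
  rw [intervalIntegral.integral_add (ivi_hker hφ hz) (ivi_hker hχ hz)]
  ring

lemma Sch_sub {φ χ : ℝ → ℂ} (hφ : IntervalIntegrable φ volume 0 (2 * π))
    (hχ : IntervalIntegrable χ volume 0 (2 * π)) {z : ℂ} (hz : ‖z‖ < 1) :
    Sch (fun t => φ t - χ t) z = Sch φ z - Sch χ z := by
  unfold Sch
  simp_rw [mul_sub]
  rw [intervalIntegral.integral_sub (ivi_hker hφ hz) (ivi_hker hχ hz)]
  ring

lemma one_add_lower {w : ℂ} {ε : ℝ} (hε : 0 < ε) (hw : 0 ≤ w.re) :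
    1 ≤ ‖1 + ε * w‖ ∧ ε * ‖w‖ ≤ ‖1 + ε * w‖ := by
  have h1 : 1 + ε * w.re ≤ ‖1 + ε * w‖ := by
    have := Complex.re_le_norm (1 + ε * w); simpa using this
  refine ⟨by nlinarith [mul_nonneg hε.le hw], ?_⟩
  have h2 : (ε * ‖w‖) ^ 2 ≤ ‖1 + ε * w‖ ^ 2 := by
    rw [mul_pow, Complex.sq_norm, Complex.sq_norm, Complex.normSq_apply, Complex.normSq_apply]
    simp only [add_re, one_re, mul_re, ofReal_re, ofReal_im, zero_mul, sub_zero, add_im, one_im,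
      mul_im, add_zero, zero_add]
    nlinarith [mul_nonneg hε.le hw]
  exact (sq_le_sq₀ (by positivity) (by positivity)).1 h2


lemma norm_rmul {r : ℝ} (h0 : 0 < r) (h1 : r < 1) {z : ℂ} (hz : ‖z‖ < 1) : ‖(r:ℂ) * z‖ < 1 := by
  rw [norm_mul, Complex.norm_real, Real.norm_eq_abs, abs_of_pos h0]
  nlinarith [norm_nonneg z]

lemma tendsto_rmul (z : ℂ) : Tendsto (fun r : ℝ => (r:ℂ) * z) (𝓝[<] 1) (𝓝 z) := by
  have : Continuous (fun r : ℝ => (r:ℂ) * z) := by fun_prop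
  have h := (this.tendsto 1).mono_left (nhdsWithin_le_nhds (s := Iio (1:ℝ)))
  simpa using h

lemma ev_Ioo : ∀ᶠ r : ℝ in 𝓝[<] 1, 0 < r ∧ r < 1 :=
  Ioo_mem_nhdsLT (by norm_num : (0:ℝ) < 1)

lemma PI_cont {n : ℝ → ℝ} (hn : IntervalIntegrable n volume 0 (2 * π)) :
    ContinuousOn (PI n) (ball 0 1) := by
  have h := Complex.continuous_re.comp_continuousOn (Sch_diff (ivi_ofReal hn)).continuousOn
  refine h.congr ?_
  intro w hw
  simp only [mem_ball, dist_zero_right] at hw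
  exact (Sch_re hn hw).symm

lemma PI_circ {n : ℝ → ℝ} (hn : IntervalIntegrable n volume 0 (2 * π)) {r : ℝ} (h0 : 0 < r) (h1 : r < 1) :
    Continuous (fun t : ℝ => PI n ((r : ℂ) * cexp (t * I))) := by
  apply (PI_cont hn).comp_continuous (by fun_prop)
  intro t
  simp only [mem_ball, dist_zero_right]
  rw [norm_re_exp h0.le]; exact h1

lemma key_eps {G : ℂ → ℂ} (hG : DifferentiableOn ℂ G (ball 0 1)) {n : ℝ → ℝ}
    (hn : IntervalIntegrable n volume 0 (2 * π)) {v : ℂ → ℝ} (hv : ContinuousOn v (ball 0 1))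
    {K : ℝ} (hv0 : ∀ w, ‖w‖ < 1 → 0 ≤ v w) (hvK : ∀ w, ‖w‖ < 1 → v w ≤ K)
    (hGv : ∀ w, ‖w‖ < 1 → ‖G w‖ ≤ PI n w + v w) {ψ : ℝ → ℝ}
    (hl : ∀ᵐ θ : ℝ, Tendsto (fun r : ℝ => v (r * cexp (θ * I))) (𝓝[<] 1) (𝓝 (ψ θ)))
    {z : ℂ} (hz : ‖z‖ < 1) : ‖G z‖ ≤ PI n z + PI ψ z := by
  have hzb : z ∈ ball (0:ℂ) 1 := by simpa using hz
  have hvc : ∀ r : ℝ, 0 < r → r < 1 → Continuous (fun t : ℝ => v ((r : ℂ) * cexp (t * I))) := by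
    intro r h0 h1
    apply hv.comp_continuous (by fun_prop)
    intro t
    simp only [mem_ball, dist_zero_right]
    rw [norm_re_exp h0.le]; exact h1
  have l1 : Tendsto (fun r : ℝ => ‖G (r * z)‖) (𝓝[<] 1) (𝓝 ‖G z‖) :=
    (((hG.continuousOn.continuousAt (isOpen_ball.mem_nhds hzb)).tendsto.comp (tendsto_rmul z))).norm
  have l2 : Tendsto (fun r : ℝ => PI n (r * z)) (𝓝[<] 1) (𝓝 (PI n z)) :=
    (((PI_cont hn).continuousAt (isOpen_ball.mem_nhds hzb)).tendsto.comp (tendsto_rmul z))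
  have l3 : Tendsto (fun r : ℝ => PI (fun t => v (r * cexp (t * I))) z) (𝓝[<] 1) (𝓝 (PI ψ z)) := by
    unfold PI
    apply Tendsto.const_mul
    apply intervalIntegral.tendsto_integral_filter_of_dominated_convergence (fun t => (hker z t).re * K)
    · filter_upwards [ev_Ioo] with r hr
      exact ((hker_re_cont hz).mul (hvc r hr.1 hr.2)).aestronglyMeasurable
    · filter_upwards [ev_Ioo] with r hr
      refine Eventually.of_forall fun t _ => ?_
      have hw : ‖(r : ℂ) * cexp (t * I)‖ < 1 := by rw [norm_re_exp hr.1.le]; exact hr.2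
      rw [norm_mul, Real.norm_eq_abs, Real.norm_eq_abs, abs_of_nonneg (hker_re_nonneg hz t),
        abs_of_nonneg (hv0 _ hw)]
      exact mul_le_mul_of_nonneg_left (hvK _ hw) (hker_re_nonneg hz t)
    · exact ((hker_re_cont hz).mul continuous_const).intervalIntegrable _ _
    · filter_upwards [hl] with t ht _
      exact ht.const_mul _
  refine le_of_tendsto_of_tendsto l1 (l2.add l3) ?_
  filter_upwards [ev_Ioo] with r hr
  have c1 := PI_circ hn hr.1 hr.2
  have c2 := hvc r hr.1 hr.2
  refine (poisson_norm hG hr.1 hr.2 hz).trans ?_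
  rw [poisson_re hn hr.1 hr.2 hz, ← PI_add (c1.intervalIntegrable _ _) (c2.intervalIntegrable _ _) hz]
  apply PI_mono_ae ((circ_cont hG hr.1 hr.2).norm.intervalIntegrable _ _)
    ((c1.add c2).intervalIntegrable _ _) hz
  refine Eventually.of_forall fun t => ?_
  have hw : ‖(r : ℂ) * cexp (t * I)‖ < 1 := by rw [norm_re_exp hr.1.le]; exact hr.2
  exact hGv _ hw

lemma key {a ψ : ℝ → ℝ} (ha : IntervalIntegrable a volume 0 (2 * π))
    (hψ : IntervalIntegrable ψ volume 0 (2 * π))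
    (hl : ∀ᵐ θ : ℝ, Tendsto (fun r : ℝ => (Sch (fun t => (a t : ℂ)) (r * cexp (θ * I))).im)
      (𝓝[<] 1) (𝓝 (ψ θ))) {z : ℂ} (hz : ‖z‖ < 1) :
    |(Sch (fun t => (a t : ℂ)) z).im| ≤ PI (fun t => |a t|) z + PI (fun t => |ψ t|) z := by
  have hzb : z ∈ ball (0:ℂ) 1 := by simpa using hz
  set p : ℝ → ℝ := fun t => max (a t) 0 with hp
  set q : ℝ → ℝ := fun t => max (-a t) 0 with hq
  have ip : IntervalIntegrable p volume 0 (2 * π) := ⟨ha.1.pos_part, ha.2.pos_part⟩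
  have iq : IntervalIntegrable q volume 0 (2 * π) := ⟨ha.1.neg_part, ha.2.neg_part⟩
  have epq : ∀ t, a t = p t - q t := by
    intro t; simp only [hp, hq]
    rcases le_total 0 (a t) with h | h
    · rw [max_eq_left h, max_eq_right (by linarith)]; ring
    · rw [max_eq_right h, max_eq_left (by linarith)]; ring
  have apq : ∀ t, |a t| = p t + q t := by
    intro t; simp only [hp, hq]
    rcases le_total 0 (a t) with h | h
    · rw [max_eq_left h, max_eq_right (by linarith), abs_of_nonneg h]; ring
    · rw [max_eq_right h, max_eq_left (by linarith), abs_of_nonpos h]; ring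
  set h₁ := Sch (fun t => (p t : ℂ)) with hh1
  set h₂ := Sch (fun t => (q t : ℂ)) with hh2
  set h := Sch (fun t => (a t : ℂ)) with hh
  have d1 : DifferentiableOn ℂ h₁ (ball 0 1) := Sch_diff (ivi_ofReal ip)
  have d2 : DifferentiableOn ℂ h₂ (ball 0 1) := Sch_diff (ivi_ofReal iq)
  have d : DifferentiableOn ℂ h (ball 0 1) := Sch_diff (ivi_ofReal ha)
  have e : ∀ w, ‖w‖ < 1 → h w = h₁ w - h₂ w := by
    intro w hw
    rw [hh, hh1, hh2, ← Sch_sub (ivi_ofReal ip) (ivi_ofReal iq) hw]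
    congr 1; ext t; rw [epq t]; push_cast; rfl
  have r1 : ∀ w, ‖w‖ < 1 → 0 ≤ (h₁ w).re := by
    intro w hw
    rw [hh1, Sch_re ip hw]; exact PI_nonneg (fun t => le_max_right _ _) hw
  have r2 : ∀ w, ‖w‖ < 1 → 0 ≤ (h₂ w).re := by
    intro w hw
    rw [hh2, Sch_re iq hw]; exact PI_nonneg (fun t => le_max_right _ _) hw
  have ra : ∀ w, ‖w‖ < 1 → |(h w).re| ≤ PI (fun t => |a t|) w := by
    intro w hw
    have : PI (fun t => |a t|) w = (h₁ w).re + (h₂ w).re := by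
      simp_rw [apq]
      rw [PI_add ip iq hw, hh1, hh2, Sch_re ip hw, Sch_re iq hw]
    rw [this, e w hw, Complex.sub_re, abs_le]
    constructor <;> linarith [r1 w hw, r2 w hw]
  have iabs : IntervalIntegrable (fun t => |a t|) volume 0 (2 * π) := ha.abs
  have iψ : IntervalIntegrable (fun t => |ψ t|) volume 0 (2 * π) := hψ.abs
  have main : ∀ ε : ℝ, 0 < ε → ‖h z / ((1 + ε * h₁ z) * (1 + ε * h₂ z))‖ ≤
      PI (fun t => |a t|) z + PI (fun t => |ψ t|) z := by
    intro ε hε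
    have n1 : ∀ w, ‖w‖ < 1 → 1 ≤ ‖1 + ε * h₁ w‖ ∧ ε * ‖h₁ w‖ ≤ ‖1 + ε * h₁ w‖ :=
      fun w hw => one_add_lower hε (r1 w hw)
    have n2 : ∀ w, ‖w‖ < 1 → 1 ≤ ‖1 + ε * h₂ w‖ ∧ ε * ‖h₂ w‖ ≤ ‖1 + ε * h₂ w‖ :=
      fun w hw => one_add_lower hε (r2 w hw)
    have k := key_eps (G := fun w => h w / ((1 + ε * h₁ w) * (1 + ε * h₂ w)))
      (n := fun t => |a t|) (v := fun w => min |(h w).im| (2/ε)) (K := 2/ε)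
      (ψ := fun t => min |ψ t| (2/ε)) ?_ iabs ?_ ?_ ?_ ?_ ?_ hz
    · refine k.trans ?_
      gcongr
      apply PI_mono_ae _ iψ hz (Eventually.of_forall fun t => min_le_left _ _)
      refine iψ.mono_fun' ?_ ?_
      · rw [uIoc_of_le twopi_nn]
        exact (iψ.1.aestronglyMeasurable).inf aestronglyMeasurable_const
      · refine Eventually.of_forall fun t => ?_
        have : (0:ℝ) ≤ min |ψ t| (2/ε) := le_min (abs_nonneg _) (by positivity)
        simp only
        rw [Real.norm_eq_abs, abs_of_nonneg this]
        exact min_le_left _ _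
    · apply d.div
      · exact ((d1.const_mul _).const_add _).mul ((d2.const_mul _).const_add _)
      · intro w hw
        simp only [mem_ball, dist_zero_right] at hw
        rw [← norm_pos_iff, norm_mul]
        have := (n1 w hw).1; have := (n2 w hw).1
        positivity
    · exact ((Complex.continuous_im.comp_continuousOn d.continuousOn).abs).inf continuousOn_const
    · intro w _; exact le_min (abs_nonneg _) (by positivity)
    · intro w _; exact min_le_right _ _
    · intro w hw
      obtain ⟨a1, a2⟩ := n1 w hw
      obtain ⟨b1, b2⟩ := n2 w hw
      have hPI : 0 ≤ PI (fun t => |a t|) w := PI_nonneg (fun t => abs_nonneg _) hw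
      have hab : 1 ≤ ‖1 + ε * h₁ w‖ * ‖1 + ε * h₂ w‖ := one_le_mul_of_one_le_of_one_le a1 b1
      have q1 : ‖h w / ((1 + ε * h₁ w) * (1 + ε * h₂ w))‖ ≤ ‖h w‖ := by
        rw [norm_div, norm_mul]
        exact div_le_self (norm_nonneg _) hab
      have q2 : ‖h w / ((1 + ε * h₁ w) * (1 + ε * h₂ w))‖ ≤ 2/ε := by
        rw [norm_div, norm_mul, div_le_div_iff₀ (by linarith) hε]
        have : ‖h w‖ ≤ ‖h₁ w‖ + ‖h₂ w‖ := by rw [e w hw]; exact norm_sub_le _ _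
        nlinarith [mul_le_mul_of_nonneg_left this hε.le, mul_nonneg (sub_nonneg.2 a1) (sub_nonneg.2 b1), mul_nonneg (sub_nonneg.2 a1) (norm_nonneg (1 + ε * h₂ w)), mul_nonneg (sub_nonneg.2 b1) (norm_nonneg (1 + ε * h₁ w))]
      rcases le_total |(h w).im| (2/ε) with hc | hc
      · rw [min_eq_left hc]
        have := Complex.norm_le_abs_re_add_abs_im (h w)
        linarith [ra w hw]
      · rw [min_eq_right hc]; linarith
    · filter_upwards [hl] with t ht
      exact ht.abs.min tendsto_const_nhds
  have lim : Tendsto (fun ε : ℝ => ‖h z / ((1 + ε * h₁ z) * (1 + ε * h₂ z))‖) (𝓝[>] 0) (𝓝 ‖h z‖) := by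
    have : ContinuousAt (fun ε : ℝ => ‖h z / ((1 + ε * h₁ z) * (1 + ε * h₂ z))‖) 0 := by
      apply ContinuousAt.norm
      apply ContinuousAt.div (by fun_prop) (by fun_prop)
      simp
    have := this.tendsto.mono_left (nhdsWithin_le_nhds (s := Ioi (0:ℝ)))
    simpa using this
  refine (Complex.abs_im_le_norm _).trans (le_of_tendsto lim ?_)
  filter_upwards [self_mem_nhdsWithin] with ε hε
  exact main ε hε


lemma rFr_lim {F : ℂ → ℂ} {Fd HF : ℝ → ℂ} (hF : IsACDeriv F Fd)
    (hHF : ∀ᵐ θ : ℝ, IsPVHilbert Fd θ (HF θ)) :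
    ∀ᵐ θ : ℝ, Tendsto (fun r : ℝ => rFr (poissonInt F) (r * cexp (θ * I))) (𝓝[<] 1) (𝓝 (HF θ)) := by
  filter_upwards [radial hF.1 hF.2.1, hHF] with θ h1 h2
  refine (h1 _ h2).congr' ?_
  filter_upwards [ev_Ioo] with r hr
  exact (rFr_eq hF (by rw [norm_re_exp hr.1.le]; exact hr.2)).symm

lemma rFr_circ {F : ℂ → ℂ} {Fd : ℝ → ℂ} (hF : IsACDeriv F Fd) {r : ℝ} (h0 : 0 < r) (h1 : r < 1) :
    Continuous (fun t : ℝ => rFr (poissonInt F) ((r : ℂ) * cexp (t * I))) := by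
  apply (rFr_harm hF).1.continuousOn.comp_continuous (by fun_prop)
  intro t
  simp only [mem_ball, dist_zero_right]
  rw [norm_re_exp h0.le]; exact h1

lemma rFr_dom {F : ℂ → ℂ} {Fd HF : ℝ → ℂ} (hF : IsACDeriv F Fd)
    (hHF : ∀ᵐ θ : ℝ, IsPVHilbert Fd θ (HF θ)) (hI : IntervalIntegrable HF volume 0 (2 * π))
    {z : ℂ} (hz : ‖z‖ < 1) : ‖rFr (poissonInt F) z‖ ≤ PI (fun t => 2 * ‖Fd t‖ + 2 * ‖HF t‖) z := by
  have hφ := hF.1 0 (2 * π)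
  have i1 : IntervalIntegrable (fun t => (Fd t).re) volume 0 (2 * π) := ⟨hφ.1.re, hφ.2.re⟩
  have i2 : IntervalIntegrable (fun t => (Fd t).im) volume 0 (2 * π) := ⟨hφ.1.im, hφ.2.im⟩
  have i3 : IntervalIntegrable (fun t => (HF t).re) volume 0 (2 * π) := ⟨hI.1.re, hI.2.re⟩
  have i4 : IntervalIntegrable (fun t => (HF t).im) volume 0 (2 * π) := ⟨hI.1.im, hI.2.im⟩
  have k1 := key i1 i3 (by
    filter_upwards [radial hF.1 hF.2.1, hHF] with θ h1 h2
    refine ((Complex.continuous_re.tendsto _).comp (h1 _ h2)).congr' ?_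
    filter_upwards [ev_Ioo] with r hr
    exact conj_re hφ (by rw [norm_re_exp hr.1.le]; exact hr.2)) hz
  have k2 := key i2 i4 (by
    filter_upwards [radial hF.1 hF.2.1, hHF] with θ h1 h2
    refine ((Complex.continuous_im.tendsto _).comp (h1 _ h2)).congr' ?_
    filter_upwards [ev_Ioo] with r hr
    exact conj_im hφ (by rw [norm_re_exp hr.1.le]; exact hr.2)) hz
  rw [← conj_re hφ hz] at k1
  rw [← conj_im hφ hz] at k2
  rw [rFr_eq hF hz]
  refine (Complex.norm_le_abs_re_add_abs_im _).trans ((add_le_add k1 k2).trans ?_)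
  rw [← PI_add i1.abs i3.abs hz, ← PI_add i2.abs i4.abs hz,
    ← PI_add (i1.abs.add i3.abs) (i2.abs.add i4.abs) hz]
  apply PI_mono_ae ((i1.abs.add i3.abs).add (i2.abs.add i4.abs))
    ((hφ.norm.const_mul 2).add (hI.norm.const_mul 2)) hz
  refine Eventually.of_forall fun t => ?_
  have := Complex.abs_re_le_norm (Fd t)
  have := Complex.abs_im_le_norm (Fd t)
  have := Complex.abs_re_le_norm (HF t)
  have := Complex.abs_im_le_norm (HF t)
  linarith

lemma PI_zero_eq (m : ℝ → ℝ) : PI m 0 = (1 / (2 * π)) * ∫ t in (0:ℝ)..(2 * π), m t := by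
  simp [PI, hker_zero]

lemma memLp_of_lim {p : ℝ≥0∞} {g : ℂ → ℂ} {HF : ℝ → ℂ}
    (hc : ∀ r : ℝ, 0 < r → r < 1 → Continuous (fun t : ℝ => g ((r : ℂ) * cexp (t * I))))
    (hl : ∀ᵐ θ : ℝ, Tendsto (fun r : ℝ => g (r * cexp (θ * I))) (𝓝[<] 1) (𝓝 (HF θ)))
    {C : ℝ} (hb : ∀ r : ℝ, 0 < r → r < 1 → eLpNorm (fun t : ℝ => g ((r : ℂ) * cexp (t * I))) p
      (volume.restrict (Ioc (0:ℝ) (2 * π))) ≤ ENNReal.ofReal C) : MemLpT p HF := by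
  have hu : Tendsto (fun n : ℕ => 1 - 1 / ((n:ℝ) + 2)) atTop (𝓝[<] 1) := by
    apply tendsto_nhdsWithin_of_tendsto_nhds_of_eventually_within
    · have h2 : Tendsto (fun n : ℕ => 1 / ((n:ℝ) + 2)) atTop (𝓝 0) := by
        have := (tendsto_one_div_add_atTop_nhds_zero_nat (𝕜 := ℝ)).comp (tendsto_add_atTop_nat 1)
        refine this.congr fun n => ?_
        simp only [Function.comp]; push_cast; congr 1; ring
      simpa using (tendsto_const_nhds (x := (1:ℝ))).sub h2
    · refine Eventually.of_forall fun n => ?_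
      have : (0:ℝ) < 1 / ((n:ℝ) + 2) := by positivity
      simp only [mem_Iio]; linarith
  have u0 : ∀ n : ℕ, 0 < 1 - 1 / ((n:ℝ) + 2) := by
    intro n
    rw [sub_pos, div_lt_one (by positivity)]
    have : (0:ℝ) ≤ n := by positivity
    linarith
  have u1 : ∀ n : ℕ, 1 - 1 / ((n:ℝ) + 2) < 1 := by
    intro n
    have : (0:ℝ) < 1 / ((n:ℝ) + 2) := by positivity
    linarith
  have ms : ∀ n : ℕ, AEStronglyMeasurable (fun t : ℝ => g (((1 - 1 / ((n:ℝ) + 2) : ℝ) : ℂ) * cexp (t * I)))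
      (volume.restrict (Ioc (0:ℝ) (2 * π))) := fun n => (hc _ (u0 n) (u1 n)).aestronglyMeasurable
  have lm : ∀ᵐ θ : ℝ ∂(volume.restrict (Ioc (0:ℝ) (2 * π))),
      Tendsto (fun n : ℕ => g (((1 - 1 / ((n:ℝ) + 2) : ℝ) : ℂ) * cexp (θ * I))) atTop (𝓝 (HF θ)) := by
    filter_upwards [ae_restrict_of_ae hl] with θ h
    exact h.comp hu
  refine ⟨aestronglyMeasurable_of_tendsto_ae atTop ms lm, ?_⟩
  refine (Lp.eLpNorm_lim_le_liminf_eLpNorm ms _ lm).trans_lt (lt_of_le_of_lt ?_ (ENNReal.ofReal_lt_top (r := C)))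
  refine liminf_le_of_frequently_le' (Frequently.of_forall fun n => hb _ (u0 n) (u1 n))

lemma main1 {F : ℂ → ℂ} {Fd HF : ℝ → ℂ} (hF : IsACDeriv F Fd)
    (hHF : ∀ᵐ θ : ℝ, IsPVHilbert Fd θ (HF θ)) :
    Memhp 1 (rFr (poissonInt F)) ↔ MemLpT 1 HF := by
  constructor
  · rintro ⟨-, M, hM⟩
    refine memLp_of_lim (C := 2 * π * M) (fun r h0 h1 => rFr_circ hF h0 h1) (rFr_lim hF hHF) ?_
    intro r h0 h1
    have h := hM r ⟨h0, h1⟩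
    have c := rFr_circ hF h0 h1
    have ci : Integrable (fun t : ℝ => rFr (poissonInt F) ((r : ℂ) * cexp (t * I)))
        (volume.restrict (Ioc (0:ℝ) (2 * π))) :=
      (intervalIntegrable_iff_integrableOn_Ioc_of_le twopi_nn).1 (c.intervalIntegrable _ _)
    simp only [Mp, Real.rpow_one, div_one] at h
    rw [eLpNorm_one_eq_lintegral_enorm, ← ofReal_integral_norm_eq_lintegral_enorm ci]
    apply ENNReal.ofReal_le_ofReal
    rw [intervalIntegral.integral_of_le twopi_nn, div_mul_eq_mul_div, one_mul,
      div_le_iff₀ (by positivity)] at h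
    linarith
  · intro h
    have hI : IntervalIntegrable HF volume 0 (2 * π) :=
      (intervalIntegrable_iff_integrableOn_Ioc_of_le twopi_nn).2 (memLp_one_iff_integrable.1 h)
    refine ⟨rFr_harm hF, PI (fun t => 2 * ‖Fd t‖ + 2 * ‖HF t‖) 0, ?_⟩
    rintro r ⟨h0, h1⟩
    have im : IntervalIntegrable (fun t => 2 * ‖Fd t‖ + 2 * ‖HF t‖) volume 0 (2 * π) :=
      ((hF.1 0 (2 * π)).norm.const_mul 2).add (hI.norm.const_mul 2)
    have e := poisson_re im h0 h1 (z := 0) (by simp)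
    rw [mul_zero] at e
    rw [e, PI_zero_eq]
    simp only [Mp, Real.rpow_one, div_one]
    gcongr
    apply intervalIntegral.integral_mono_on twopi_nn
      ((rFr_circ hF h0 h1).norm.intervalIntegrable _ _) ((PI_circ im h0 h1).intervalIntegrable _ _)
    intro t _
    exact rFr_dom hF hHF hI (by rw [norm_re_exp h0.le]; exact h1)

lemma ae_Icc {P : ℝ → Prop} (h : ∀ᵐ t ∂(volume.restrict (Ioc (0:ℝ) (2 * π))), P t) :
    ∀ᵐ t ∂(volume.restrict (Icc (0:ℝ) (2 * π))), P t := by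
  rwa [← Measure.restrict_congr_set (Ioc_ae_eq_Icc (μ := volume) (a := (0:ℝ)) (b := 2 * π))]

lemma mainT {F : ℂ → ℂ} {Fd HF : ℝ → ℂ} (hF : IsACDeriv F Fd) (hLp : MemLpT ⊤ Fd)
    (hHF : ∀ᵐ θ : ℝ, IsPVHilbert Fd θ (HF θ)) :
    Memhinf (rFr (poissonInt F)) ↔ MemLpT ⊤ HF := by
  constructor
  · rintro ⟨-, M, hM⟩
    refine memLp_of_lim (C := M) (fun r h0 h1 => rFr_circ hF h0 h1) (rFr_lim hF hHF) ?_
    intro r h0 h1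
    rw [eLpNorm_exponent_top]
    refine eLpNormEssSup_le_of_ae_bound (Eventually.of_forall fun t => hM _ ?_)
    simp only [mem_ball, dist_zero_right]
    rw [norm_re_exp h0.le]; exact h1
  · intro h
    have hI : IntervalIntegrable HF volume 0 (2 * π) :=
      (intervalIntegrable_iff_integrableOn_Ioc_of_le twopi_nn).2 (MemLp.integrable le_top h)
    have bd : ∀ {φ : ℝ → ℂ}, MemLpT ⊤ φ → ∃ C : ℝ, ∀ᵐ t ∂(volume.restrict (Icc (0:ℝ) (2 * π))), ‖φ t‖ ≤ C := by
      intro φ hφ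
      have hlt := hφ.2
      rw [eLpNorm_exponent_top] at hlt
      refine ⟨(eLpNormEssSup φ (volume.restrict (Ioc (0:ℝ) (2 * π)))).toReal, ae_Icc ?_⟩
      filter_upwards [enorm_ae_le_eLpNormEssSup φ (volume.restrict (Ioc (0:ℝ) (2 * π)))] with t ht
      rw [← toReal_enorm]
      exact ENNReal.toReal_mono hlt.ne ht
    obtain ⟨C, hC⟩ := bd hLp
    obtain ⟨D, hD⟩ := bd h
    refine ⟨rFr_harm hF, 2 * C + 2 * D, ?_⟩
    intro z hz
    simp only [mem_ball, dist_zero_right] at hz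
    refine (rFr_dom hF hHF hI hz).trans ?_
    have e : PI (fun _ => 2 * C + 2 * D) z = 2 * C + 2 * D := by
      have h1 := PI_one hz
      have : PI (fun _ => 2 * C + 2 * D) z = PI (fun _ => 1) z * (2 * C + 2 * D) := by
        simp only [PI, intervalIntegral.integral_mul_const]; ring
      rw [this, h1, one_mul]
    rw [← e]
    apply PI_mono_ae (((hF.1 0 (2 * π)).norm.const_mul 2).add (hI.norm.const_mul 2))
      (continuous_const.intervalIntegrable _ _) hz
    filter_upwards [hC, hD] with t a b
    linarith

/-- For `p = 1` or `p = ∞`, `F : 𝕋 → ℂ` absolutely continuous with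
`Ḟ ∈ L^p(𝕋)` and `f = P[F]`, the function `z ↦ r f_r(z)` belongs to `h^p(𝔻)` iff the
Hilbert transform `H(Ḟ)` belongs to `L^p(𝕋)`. -/
theorem stmt4 (p : ℝ≥0∞) (hp : p = 1 ∨ p = ⊤) (F : ℂ → ℂ) (Fd HF : ℝ → ℂ)
    (hF : IsACDeriv F Fd) (hLp : MemLpT p Fd)
    (hHF : ∀ᵐ θ : ℝ, IsPVHilbert Fd θ (HF θ)) :
    (p = 1 → (Memhp 1 (rFr (poissonInt F)) ↔ MemLpT 1 HF)) ∧
    (p = ⊤ → (Memhinf (rFr (poissonInt F)) ↔ MemLpT ⊤ HF)) := by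
  refine ⟨fun _ => main1 hF hHF, fun h => ?_⟩
  subst h
  exact mainT hF hLp hHF

end
end

section
/- Let F : 𝕋 → ℂ be absolutely continuous and let f = P[F] be its Poisson integral. Then for every z ∈ 𝔻, f_z(z) = (1/(2πi)) ∫₀^{2π} Ḟ(e^{it}) / (e^{it} − z) dt. -/
open MeasureTheory Complex Metric Set Filter
open scoped Real Topology ENNReal

noncomputable section

lemma aux_ibp {g K K' : ℝ → ℂ} {T : ℝ} (hT : 0 ≤ T) (hg : IntervalIntegrable g volume 0 T)
    (hK : ∀ t, HasDerivAt K (K' t) t) (hK' : Continuous K') :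
    ∫ t in (0:ℝ)..T, K' t * (∫ s in (0:ℝ)..t, g s)
      = K T * (∫ s in (0:ℝ)..T, g s) - ∫ s in (0:ℝ)..T, K s * g s := by
  have hKc : Continuous K := continuous_iff_continuousAt.2 fun t => (hK t).continuousAt
  have hgi : Integrable g (volume.restrict (Ioc 0 T)) :=
    (intervalIntegrable_iff_integrableOn_Ioc_of_le hT).1 hg
  have hKi : Integrable K' (volume.restrict (Ioc 0 T)) :=
    (intervalIntegrable_iff_integrableOn_Ioc_of_le hT).1 (hK'.intervalIntegrable 0 T)
  let f : ℝ → ℝ → ℂ := fun t s => if s ≤ t then K' t * g s else 0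
  have hf : Integrable (Function.uncurry f)
      ((volume.restrict (Ioc 0 T)).prod (volume.restrict (Ioc 0 T))) := by
    have h1 := (hKi.mul_prod hgi).indicator
      (s := {p : ℝ × ℝ | p.2 ≤ p.1}) (measurableSet_le measurable_snd measurable_fst)
    refine h1.congr (Eventually.of_forall fun p => ?_)
    simp [f, Function.uncurry, Set.indicator]
  have hsw := integral_integral_swap hf
  have hL : ∀ t ∈ Ioc 0 T, ∫ s in Ioc 0 T, f t s = K' t * (∫ s in (0:ℝ)..t, g s) := by
    intro t ht
    have : (fun s => f t s) = (Iic t).indicator (fun s => K' t * g s) := by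
      ext s; simp [f, Set.indicator]
    rw [this, setIntegral_indicator measurableSet_Iic, Ioc_inter_Iic, min_eq_right ht.2,
      integral_const_mul, intervalIntegral.integral_of_le ht.1.le]
  have hR : ∀ s ∈ Ioc 0 T, ∫ t in Ioc 0 T, f t s = (K T - K s) * g s := by
    intro s hs
    have : (fun t => f t s) = (Ici s).indicator (fun t => K' t * g s) := by
      ext t; simp [f, Set.indicator]
    have h2 : Ioc 0 T ∩ Ici s = Icc s T := by
      ext x; simp only [mem_inter_iff, mem_Ioc, mem_Ici, mem_Icc]
      constructor
      · rintro ⟨⟨_, h⟩, h'⟩; exact ⟨h', h⟩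
      · rintro ⟨h, h'⟩; exact ⟨⟨hs.1.trans_le h, h'⟩, h⟩
    rw [this, setIntegral_indicator measurableSet_Ici, h2, integral_mul_const,
      integral_Icc_eq_integral_Ioc, ← intervalIntegral.integral_of_le hs.2,
      intervalIntegral.integral_eq_sub_of_hasDerivAt (fun t _ => hK t)
        (hK'.intervalIntegrable _ _)]
  rw [setIntegral_congr_fun measurableSet_Ioc hL, setIntegral_congr_fun measurableSet_Ioc hR,
    ← intervalIntegral.integral_of_le hT, ← intervalIntegral.integral_of_le hT] at hsw
  rw [hsw]
  simp only [sub_mul]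
  rw [intervalIntegral.integral_sub (hg.const_mul _) (hg.continuousOn_mul hKc.continuousOn),
    intervalIntegral.integral_const_mul]

lemma aux_ne {z : ℂ} (hz : z ∈ ball (0:ℂ) 1) (t : ℝ) :
    Complex.exp ((t : ℂ) * Complex.I) - z ≠ 0 := by
  intro h
  have h1 := Complex.norm_exp_ofReal_mul_I t
  rw [sub_eq_zero.1 h] at h1
  simp at hz
  linarith

lemma aux_cont {z : ℂ} (hz : z ∈ ball (0:ℂ) 1) {G : ℝ → ℂ} (hG : Continuous G) :
    Continuous fun t : ℝ => Complex.exp ((t : ℂ) * Complex.I) /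
      (Complex.exp ((t : ℂ) * Complex.I) - z) * G t := by
  refine Continuous.mul (Continuous.div (by fun_prop) (by fun_prop) (aux_ne hz)) hG

lemma aux_cont2 {z : ℂ} (hz : z ∈ ball (0:ℂ) 1) {G : ℝ → ℂ} (hG : Continuous G) :
    Continuous fun t : ℝ => Complex.exp ((t : ℂ) * Complex.I) /
      (Complex.exp ((t : ℂ) * Complex.I) - z) ^ 2 * G t := by
  refine Continuous.mul (Continuous.div (by fun_prop) (by fun_prop)
    (fun t => pow_ne_zero _ (aux_ne hz t))) hG

lemma aux_deriv {G : ℝ → ℂ} (hG : Continuous G) {z : ℂ} (hz : z ∈ ball (0:ℂ) 1) :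
    HasDerivAt (fun z : ℂ => ∫ t in (0:ℝ)..(2 * π), Complex.exp ((t : ℂ) * Complex.I) /
      (Complex.exp ((t : ℂ) * Complex.I) - z) * G t)
      (∫ t in (0:ℝ)..(2 * π), Complex.exp ((t : ℂ) * Complex.I) /
      (Complex.exp ((t : ℂ) * Complex.I) - z) ^ 2 * G t) z := by
  have hz1 : ‖z‖ < 1 := by simpa using hz
  set r := (1 - ‖z‖) / 2 with hr
  have hr0 : 0 < r := by rw [hr]; linarith
  have hsub : ∀ x ∈ ball z r, ‖x‖ ≤ 1 - r := by
    intro x hx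
    rw [mem_ball, dist_eq_norm] at hx
    have := norm_sub_norm_le x z
    linarith
  have hb : ∀ x ∈ ball z r, x ∈ ball (0:ℂ) 1 := by
    intro x hx
    have := hsub x hx
    simp; linarith
  refine (intervalIntegral.hasDerivAt_integral_of_dominated_loc_of_deriv_le
    (F := fun (z : ℂ) (t : ℝ) => Complex.exp ((t : ℂ) * Complex.I) /
      (Complex.exp ((t : ℂ) * Complex.I) - z) * G t)
    (F' := fun (z : ℂ) (t : ℝ) => Complex.exp ((t : ℂ) * Complex.I) /
      (Complex.exp ((t : ℂ) * Complex.I) - z) ^ 2 * G t)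
    (bound := fun t => 1 / r ^ 2 * ‖G t‖) (ball_mem_nhds z hr0) ?_ ?_ ?_ ?_ ?_ ?_).2
  · filter_upwards [ball_mem_nhds z hr0] with x hx
    exact (aux_cont (hb x hx) hG).aestronglyMeasurable
  · exact (aux_cont hz hG).intervalIntegrable _ _
  · exact (aux_cont2 hz hG).aestronglyMeasurable
  · refine Eventually.of_forall fun t _ x hx => ?_
    rw [norm_mul, norm_div, norm_pow, Complex.norm_exp_ofReal_mul_I]
    have h1 : r ≤ ‖Complex.exp ((t : ℂ) * Complex.I) - x‖ := by
      have := norm_sub_norm_le (Complex.exp ((t : ℂ) * Complex.I)) x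
      rw [Complex.norm_exp_ofReal_mul_I] at this
      have := hsub x hx
      linarith
    gcongr
  · exact (hG.norm.const_mul _).intervalIntegrable _ _
  · refine Eventually.of_forall fun t _ x hx => ?_
    have h := aux_ne (hb x hx) t
    have h1 := (((hasDerivAt_id x).const_sub (Complex.exp ((t : ℂ) * Complex.I))).inv h).const_mul
      (Complex.exp ((t : ℂ) * Complex.I))
    convert h1.mul_const (G t) using 1
    · rfl
    · ext y; simp [div_eq_mul_inv]
    · simp [div_eq_mul_inv]

lemma aux_ker {z : ℂ} (hz : z ∈ ball (0:ℂ) 1) (t : ℝ) :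
    (poissonKer (z * Complex.exp (-(t : ℂ) * Complex.I)) : ℂ)
      = Complex.exp ((t : ℂ) * Complex.I) / (Complex.exp ((t : ℂ) * Complex.I) - z)
        + (starRingEnd ℂ) (Complex.exp ((t : ℂ) * Complex.I) /
          (Complex.exp ((t : ℂ) * Complex.I) - z)) - 1 := by
  have h0 := aux_ne hz t
  have hc : (starRingEnd ℂ) (Complex.exp ((t : ℂ) * Complex.I)) =
      (Complex.exp ((t : ℂ) * Complex.I))⁻¹ := by
    rw [← Complex.exp_conj, ← Complex.exp_neg]; simp
  have hm : Complex.exp (-(t : ℂ) * Complex.I) = (Complex.exp ((t : ℂ) * Complex.I))⁻¹ := by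
    rw [← Complex.exp_neg]; congr 1; ring
  have hw : Complex.exp ((t : ℂ) * Complex.I) ≠ 0 := Complex.exp_ne_zero _
  have h0' : (starRingEnd ℂ) (Complex.exp ((t : ℂ) * Complex.I) - z) ≠ 0 :=
    (map_ne_zero (starRingEnd ℂ)).2 h0
  rw [hm]
  generalize Complex.exp ((t : ℂ) * Complex.I) = w at *
  unfold poissonKer
  push_cast
  rw [← Complex.conj_mul', ← Complex.conj_mul']
  simp only [map_sub, map_mul, map_div₀, map_inv₀, hc, map_one] at *
  have h1 : 1 - z * w⁻¹ ≠ 0 := by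
    intro h; apply h0; field_simp at h; simpa using h
  have h2 : 1 - w * (starRingEnd ℂ) z ≠ 0 := by
    intro h; apply h0'; field_simp; simpa using h
  have e1 : 1 - z * w⁻¹ = (w - z) / w := by field_simp
  have e2 : w⁻¹ - (starRingEnd ℂ) z = (1 - w * (starRingEnd ℂ) z) / w := by field_simp
  rw [e1, e2]
  simp only [inv_inv]
  rw [mul_comm ((starRingEnd ℂ) z) w]
  field_simp
  ring

/-- For `F : 𝕋 → ℂ` absolutely continuous and `f = P[F]`, for every
`z ∈ 𝔻`, `f_z(z) = (1/(2πi)) ∫₀^{2π} Ḟ(e^{it})/(e^{it} - z) dt`. -/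
theorem stmt5 (F : ℂ → ℂ) (Fd : ℝ → ℂ) (hF : IsACDeriv F Fd) :
    ∀ z ∈ ball (0:ℂ) 1,
      wdz (poissonInt F) z
        = (1 / (2 * (π : ℂ) * Complex.I)) *
            ∫ t in (0:ℝ)..(2 * π), Fd t / (Complex.exp ((t : ℂ) * Complex.I) - z) := by
  intro z hz
  obtain ⟨hint, -, hFt⟩ := hF
  set G : ℝ → ℂ := fun t => F (Complex.exp ((t : ℂ) * Complex.I)) with hGdef
  have hGe : ∀ t, G t = F 1 + ∫ s in (0:ℝ)..t, Fd s := hFt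
  have hG : Continuous G := by
    have : G = fun t => F 1 + ∫ s in (0:ℝ)..t, Fd s := funext hGe
    rw [this]
    exact continuous_const.add (intervalIntegral.continuous_primitive hint 0)
  have hGb : ∫ s in (0:ℝ)..(2 * π), Fd s = 0 := by
    have h := hFt (2 * π)
    push_cast at h
    rw [Complex.exp_two_pi_mul_I] at h
    exact (left_eq_add.1 h)
  have hGs : Continuous fun t => (starRingEnd ℂ) (G t) := Complex.continuous_conj.comp hG
  have hpi : (0:ℝ) ≤ 2 * π := by positivity
  -- decomposition
  have hdec : poissonInt F =ᶠ[𝓝 z] fun x => (1 / (2 * π) : ℂ) *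
      (((∫ t in (0:ℝ)..(2 * π), Complex.exp ((t : ℂ) * Complex.I) /
        (Complex.exp ((t : ℂ) * Complex.I) - x) * G t)
      + (starRingEnd ℂ) (∫ t in (0:ℝ)..(2 * π), Complex.exp ((t : ℂ) * Complex.I) /
        (Complex.exp ((t : ℂ) * Complex.I) - x) * (starRingEnd ℂ) (G t)))
      - ∫ t in (0:ℝ)..(2 * π), G t) := by
    filter_upwards [isOpen_ball.mem_nhds hz] with x hx
    unfold poissonInt
    have hcj : (starRingEnd ℂ) (∫ t in (0:ℝ)..(2 * π), Complex.exp ((t : ℂ) * Complex.I) /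
        (Complex.exp ((t : ℂ) * Complex.I) - x) * (starRingEnd ℂ) (G t))
        = ∫ t in (0:ℝ)..(2 * π), (starRingEnd ℂ) (Complex.exp ((t : ℂ) * Complex.I) /
        (Complex.exp ((t : ℂ) * Complex.I) - x) * (starRingEnd ℂ) (G t)) := by
      rw [intervalIntegral.integral_of_le hpi, intervalIntegral.integral_of_le hpi, integral_conj]
    have c1 := aux_cont hx hG
    have c2 : Continuous fun t : ℝ => (starRingEnd ℂ) (Complex.exp ((t : ℂ) * Complex.I) /
        (Complex.exp ((t : ℂ) * Complex.I) - x) * (starRingEnd ℂ) (G t)) :=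
      Complex.continuous_conj.comp (aux_cont hx hGs)
    have c3 : Continuous fun t : ℝ => Complex.exp ((t : ℂ) * Complex.I) /
        (Complex.exp ((t : ℂ) * Complex.I) - x) * G t +
        (starRingEnd ℂ) (Complex.exp ((t : ℂ) * Complex.I) /
        (Complex.exp ((t : ℂ) * Complex.I) - x) * (starRingEnd ℂ) (G t)) := c1.add c2
    rw [hcj, ← intervalIntegral.integral_add (c1.intervalIntegrable _ _)
      (c2.intervalIntegrable _ _), ← intervalIntegral.integral_sub
      (c3.intervalIntegrable _ _) (hG.intervalIntegrable _ _)]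
    congr 1
    refine intervalIntegral.integral_congr fun t _ => ?_
    simp only [aux_ker hx t, map_mul, Complex.conj_conj]
    ring
  have hA := (aux_deriv hG hz).hasFDerivAt.restrictScalars ℝ
  have hB := (aux_deriv hGs hz).hasFDerivAt.restrictScalars ℝ
  have hB' := (Complex.conjCLE.toContinuousLinearMap.hasFDerivAt).comp z hB
  have hD := ((hA.add hB').sub_const (∫ t in (0:ℝ)..(2 * π), G t)).const_mul (1 / (2 * π) : ℂ)
  have hfd := hdec.fderiv_eq.trans hD.fderiv
  have key : wdz (poissonInt F) z = (1 / (2 * π) : ℂ) *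
      ∫ t in (0:ℝ)..(2 * π), Complex.exp ((t : ℂ) * Complex.I) /
      (Complex.exp ((t : ℂ) * Complex.I) - z) ^ 2 * G t := by
    unfold wdz
    rw [hfd]
    generalize (∫ t in (0:ℝ)..(2 * π), Complex.exp ((t : ℂ) * Complex.I) /
      (Complex.exp ((t : ℂ) * Complex.I) - z) ^ 2 * G t) = a
    generalize (∫ t in (0:ℝ)..(2 * π), Complex.exp ((t : ℂ) * Complex.I) /
      (Complex.exp ((t : ℂ) * Complex.I) - z) ^ 2 * (starRingEnd ℂ) (G t)) = b
    simp
    ring_nf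
    simp
    ring
  rw [key]
  have hK : ∀ t : ℝ, HasDerivAt (fun t : ℝ => (Complex.exp ((t : ℂ) * Complex.I) - z)⁻¹)
      (-(Complex.exp ((t : ℂ) * Complex.I) * Complex.I) /
        (Complex.exp ((t : ℂ) * Complex.I) - z) ^ 2) t := by
    intro t
    have h1 : HasDerivAt (fun t : ℝ => (t : ℂ) * Complex.I) Complex.I t := by
      simpa using (Complex.ofRealCLM.hasDerivAt (x := t)).mul_const Complex.I
    exact (h1.cexp.sub_const z).inv (aux_ne hz t)
  have hK' : Continuous fun t : ℝ => -(Complex.exp ((t : ℂ) * Complex.I) * Complex.I) /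
        (Complex.exp ((t : ℂ) * Complex.I) - z) ^ 2 :=
    Continuous.div (by fun_prop) (by fun_prop) (fun t => pow_ne_zero _ (aux_ne hz t))
  have hibp := aux_ibp hpi (hint 0 (2 * π)) hK hK'
  have h0 := intervalIntegral.integral_eq_sub_of_hasDerivAt (fun t _ => hK t)
    (hK'.intervalIntegrable 0 (2 * π))
  have h0' : ∫ t in (0:ℝ)..(2 * π), -(Complex.exp ((t : ℂ) * Complex.I) * Complex.I) /
        (Complex.exp ((t : ℂ) * Complex.I) - z) ^ 2 = 0 := by
    rw [h0]; push_cast; rw [Complex.exp_two_pi_mul_I]; simp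
  have hprim : Continuous fun t => ∫ s in (0:ℝ)..t, Fd s :=
    intervalIntegral.continuous_primitive hint 0
  have hsplit : ∫ t in (0:ℝ)..(2 * π), Complex.exp ((t : ℂ) * Complex.I) /
      (Complex.exp ((t : ℂ) * Complex.I) - z) ^ 2 * G t
      = Complex.I * ((∫ t in (0:ℝ)..(2 * π), -(Complex.exp ((t : ℂ) * Complex.I) * Complex.I) /
        (Complex.exp ((t : ℂ) * Complex.I) - z) ^ 2) * F 1 +
        ∫ t in (0:ℝ)..(2 * π), -(Complex.exp ((t : ℂ) * Complex.I) * Complex.I) /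
        (Complex.exp ((t : ℂ) * Complex.I) - z) ^ 2 * ∫ s in (0:ℝ)..t, Fd s) := by
    have d1 : Continuous fun t : ℝ => -(Complex.exp ((t : ℂ) * Complex.I) * Complex.I) /
        (Complex.exp ((t : ℂ) * Complex.I) - z) ^ 2 * F 1 := hK'.mul continuous_const
    have d2 : Continuous fun t : ℝ => -(Complex.exp ((t : ℂ) * Complex.I) * Complex.I) /
        (Complex.exp ((t : ℂ) * Complex.I) - z) ^ 2 * ∫ s in (0:ℝ)..t, Fd s := hK'.mul hprim
    rw [← intervalIntegral.integral_mul_const, ← intervalIntegral.integral_add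
      (d1.intervalIntegrable _ _)
      (d2.intervalIntegrable _ _), ← intervalIntegral.integral_const_mul]
    refine intervalIntegral.integral_congr fun t _ => ?_
    simp only [hGe t]
    linear_combination ((Complex.exp ((t : ℂ) * Complex.I) /
      (Complex.exp ((t : ℂ) * Complex.I) - z) ^ 2) * (F 1 + ∫ s in (0:ℝ)..t, Fd s)) * Complex.I_sq
  rw [hsplit, h0', hibp, hGb]
  have hfin : ∫ t in (0:ℝ)..(2 * π), Fd t / (Complex.exp ((t : ℂ) * Complex.I) - z)
      = ∫ t in (0:ℝ)..(2 * π), (Complex.exp ((t : ℂ) * Complex.I) - z)⁻¹ * Fd t := by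
    refine intervalIntegral.integral_congr fun t _ => ?_
    simp only [div_eq_mul_inv, mul_comm]
  rw [hfin]
  have hp : (π : ℂ) ≠ 0 := by exact_mod_cast Real.pi_ne_zero
  field_simp
  simp

end
end

section
/- Let F : 𝕋 → ℂ be absolutely continuous and let f = P[F] be its Poisson integral. Then for every z ∈ 𝔻, i z f_z(z) equals the Cauchy-type integral of Ḟ: i z f_z(z) = (1/(2πi)) ∫_𝕋 Ḟ(w)/(w − z) dw = (1/(2π)) ∫₀^{2π} Ḟ(e^{it}) / (1 − z e^{−it}) dt. -/
open MeasureTheory Complex Metric Set Filter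
open scoped Real Topology ENNReal

noncomputable section

lemma aux_fubini (g v v' : ℝ → ℂ) (hg : ∀ a b : ℝ, IntervalIntegrable g volume a b)
    (hv : ∀ t, HasDerivAt v (v' t) t) (hc : Continuous v') (T : ℝ) (hT : 0 ≤ T) :
    ∫ t in (0:ℝ)..T, (∫ s in (0:ℝ)..t, g s) * v' t = ∫ s in (0:ℝ)..T, g s * (v T - v s) := by
  let H : ℝ → ℝ → ℂ := fun t s => if s ≤ t then v' t * g s else 0
  have hint : IntegrableOn (Function.uncurry H) (uIoc 0 T ×ˢ uIoc 0 T) := by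
    have h1 : Integrable (fun p : ℝ × ℝ => v' p.1 * g p.2)
        ((volume.restrict (uIoc 0 T)).prod (volume.restrict (uIoc 0 T))) :=
      Integrable.mul_prod (intervalIntegrable_iff.1 (hc.intervalIntegrable 0 T))
        (intervalIntegrable_iff.1 (hg 0 T))
    rw [IntegrableOn, Measure.volume_eq_prod, ← Measure.prod_restrict]
    have hm : MeasurableSet {p : ℝ × ℝ | p.2 ≤ p.1} := measurableSet_le measurable_snd measurable_fst
    refine (h1.indicator hm).congr (Eventually.of_forall fun p => ?_)
    simp [H, Function.uncurry, indicator]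
  have hswap := intervalIntegral_intervalIntegral_swap (F := H) (a := 0) (b := T) (c := 0) (d := T) hint
  have e1 : ∀ t ∈ uIcc 0 T, (∫ s in (0:ℝ)..t, g s) * v' t = ∫ s in (0:ℝ)..T, H t s := by
    intro t ht
    rw [uIcc_of_le hT] at ht
    have : ∫ s in (0:ℝ)..T, H t s = ∫ s in (0:ℝ)..T, indicator {s | s ≤ t} (fun s => v' t * g s) s := by
      apply intervalIntegral.integral_congr
      intro s _
      simp [H, indicator]
    rw [this, intervalIntegral.integral_indicator ht, intervalIntegral.integral_const_mul, mul_comm]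
  have e2 : ∀ s ∈ uIcc 0 T, ∫ t in (0:ℝ)..T, H t s = g s * (v T - v s) := by
    intro s hs
    rw [uIcc_of_le hT] at hs
    have h0 : ∫ t in s..T, v' t = v T - v s :=
      intervalIntegral.integral_eq_sub_of_hasDerivAt (fun t _ => hv t) (hc.intervalIntegrable _ _)
    have hsplit : IntegrableOn (fun t => v' t * g s) (Ioc 0 T) :=
      ((hc.mul continuous_const).integrableOn_Ioc)
    rw [intervalIntegral.integral_of_le hT, ← h0, intervalIntegral.integral_of_le hs.2]
    have : ∫ t in Ioc 0 T, H t s = ∫ t in Ioc 0 T, indicator (Ici s) (fun t => v' t * g s) t := by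
      congr 1
    rw [this, setIntegral_indicator measurableSet_Ici, mul_comm (g s), ← integral_mul_const]
    apply setIntegral_congr_set
    have : (Ioc s T : Set ℝ) =ᵐ[volume] Icc s T := Ioc_ae_eq_Icc
    refine EventuallyEq.trans ?_ this.symm
    by_cases h : s = 0
    · subst h
      have : Ioc 0 T ∩ Ici 0 = Ioc 0 T := by
        ext x; simp only [mem_inter_iff, mem_Ioc, mem_Ici]; grind
      rw [this]; assumption
    · have hs0 := lt_of_le_of_ne hs.1 (Ne.symm h)
      have : Ioc 0 T ∩ Ici s = Icc s T := by
        ext x; simp only [mem_inter_iff, mem_Ioc, mem_Ici, mem_Icc]; grind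
      rw [this]; exact ae_eq_refl _
  rw [intervalIntegral.integral_congr e1, hswap, intervalIntegral.integral_congr e2]

lemma aux_ne_s7 {w c : ℂ} (hw : ‖w‖ < 1) (hc : ‖c‖ = 1) : 1 - w * c ≠ 0 := by
  intro h
  have : w * c = 1 := (sub_eq_zero.1 h).symm
  have h2 : ‖w * c‖ = 1 := by rw [this]; simp
  rw [norm_mul, hc, mul_one] at h2
  linarith

lemma aux_deriv_s7 (u c : ℝ → ℂ) (hu : Continuous u) (hc : Continuous c) (hc1 : ∀ t, ‖c t‖ = 1)
    (z : ℂ) (hz : ‖z‖ < 1) (T : ℝ) :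
    HasDerivAt (fun w => ∫ t in (0:ℝ)..T, u t / (1 - w * c t))
      (∫ t in (0:ℝ)..T, u t * c t / (1 - z * c t) ^ 2) z := by
  have hcF : ∀ w : ℂ, ‖w‖ < 1 → Continuous fun t => u t / (1 - w * c t) := fun w hw =>
    hu.div (by fun_prop) fun t => aux_ne_s7 hw (hc1 t)
  set ε := (1 - ‖z‖) / 2 with hε
  have hε0 : 0 < ε := by rw [hε]; linarith
  have hb : ∀ w ∈ ball z ε, ‖w‖ < 1 - ε := by
    intro w hw
    rw [mem_ball, dist_eq_norm] at hw
    have := norm_le_norm_add_norm_sub' w z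
    rw [hε] at *
    linarith
  refine (intervalIntegral.hasDerivAt_integral_of_dominated_loc_of_deriv_le
    (F' := fun w t => u t * c t / (1 - w * c t) ^ 2)
    (bound := fun t => ‖u t‖ / ε ^ 2) (ball_mem_nhds z hε0) ?_ ?_ ?_ ?_ ?_ ?_).2
  · filter_upwards [ball_mem_nhds z hε0] with w hw
    exact (hcF w (by linarith [hb w hw])).aestronglyMeasurable
  · exact (hcF z hz).intervalIntegrable _ _
  · have : Continuous fun t => u t * c t / (1 - z * c t) ^ 2 :=
      (hu.mul hc).div (by fun_prop) fun t => pow_ne_zero 2 (aux_ne_s7 hz (hc1 t))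
    exact this.aestronglyMeasurable
  · refine Eventually.of_forall fun t _ w hw => ?_
    rw [norm_div, norm_mul, hc1, mul_one, norm_pow]
    have h1 : ε ≤ ‖1 - w * c t‖ := by
      have := norm_sub_norm_le 1 (w * c t)
      rw [norm_mul, hc1, mul_one, norm_one] at this
      linarith [hb w hw]
    gcongr
  · exact Continuous.intervalIntegrable (by fun_prop) _ _
  · refine Eventually.of_forall fun t _ w hw => ?_
    have hne := aux_ne_s7 (show ‖w‖ < 1 by linarith [hb w hw]) (hc1 t)
    have h1 : HasDerivAt (fun w => 1 - w * c t) (-(c t)) w := by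
      simpa using ((hasDerivAt_id w).mul_const (c t)).const_sub 1
    have := (hasDerivAt_const w (u t)).div h1 hne
    exact this.congr_deriv (by ring)

lemma aux_ker_s7 (ζ : ℂ) (h : ‖ζ‖ < 1) :
    (poissonKer ζ : ℂ) = 1 / (1 - ζ) + 1 / (1 - (starRingEnd ℂ) ζ) - 1 := by
  have h1 : 1 - ζ ≠ 0 := by simpa using aux_ne_s7 h (norm_one (α := ℂ))
  have h2 : 1 - (starRingEnd ℂ) ζ ≠ 0 := by
    simpa using aux_ne_s7 (w := (starRingEnd ℂ) ζ) (by simpa using h) (norm_one (α := ℂ))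
  unfold poissonKer
  push_cast
  have e1 : (‖ζ‖ : ℂ) ^ 2 = ζ * (starRingEnd ℂ) ζ := (Complex.mul_conj' ζ).symm
  have e2 : (‖1 - ζ‖ : ℂ) ^ 2 = (1 - ζ) * (1 - (starRingEnd ℂ) ζ) := by
    rw [← Complex.mul_conj']; simp
  rw [e1, e2]
  field_simp
  ring

lemma aux_poisson (F : ℂ → ℂ) (u : ℝ → ℂ) (hu : Continuous u)
    (hFu : ∀ t : ℝ, F (Complex.exp ((t : ℂ) * Complex.I)) = u t) (z : ℂ) (hz : ‖z‖ < 1) :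
    wdz (poissonInt F) z = (1 / (2 * (π : ℂ))) * ∫ t in (0:ℝ)..(2 * π),
      u t * Complex.exp (-(t : ℂ) * Complex.I) / (1 - z * Complex.exp (-(t : ℂ) * Complex.I)) ^ 2 := by
  have hn1 : ∀ t : ℝ, ‖Complex.exp (-(t : ℂ) * Complex.I)‖ = 1 := fun t => by
    have := Complex.norm_exp_ofReal_mul_I (-t)
    push_cast at this; exact this
  have hn2 : ∀ t : ℝ, ‖Complex.exp ((t : ℂ) * Complex.I)‖ = 1 := Complex.norm_exp_ofReal_mul_I
  have hc1 : Continuous fun t : ℝ => Complex.exp (-(t : ℂ) * Complex.I) := by fun_prop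
  have hc2 : Continuous fun t : ℝ => Complex.exp ((t : ℂ) * Complex.I) := by fun_prop
  have hA := aux_deriv_s7 u _ hu hc1 hn1 z hz (2 * π)
  have hB := aux_deriv_s7 u _ hu hc2 hn2 ((starRingEnd ℂ) z) (by simpa using hz) (2 * π)
  set a := ∫ t in (0:ℝ)..(2 * π),
      u t * Complex.exp (-(t : ℂ) * Complex.I) / (1 - z * Complex.exp (-(t : ℂ) * Complex.I)) ^ 2
  set A := fun w : ℂ => ∫ t in (0:ℝ)..(2 * π), u t / (1 - w * Complex.exp (-(t : ℂ) * Complex.I))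
    with hAdef
  set B := fun w : ℂ => ∫ t in (0:ℝ)..(2 * π), u t / (1 - w * Complex.exp ((t : ℂ) * Complex.I))
    with hBdef
  have heq : ∀ w : ℂ, ‖w‖ < 1 → poissonInt F w =
      (1 / (2 * (π : ℂ))) * (A w + B ((starRingEnd ℂ) w) - ∫ t in (0:ℝ)..(2 * π), u t) := by
    intro w hw
    have hw' : ‖(starRingEnd ℂ) w‖ < 1 := by simpa using hw
    unfold poissonInt
    congr 1
    have i1 : IntervalIntegrable (fun t : ℝ => u t / (1 - w * Complex.exp (-(t : ℂ) * Complex.I)))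
        volume 0 (2 * π) :=
      (hu.div (by fun_prop) fun t => aux_ne_s7 hw (hn1 t)).intervalIntegrable _ _
    have i2 : IntervalIntegrable
        (fun t : ℝ => u t / (1 - (starRingEnd ℂ) w * Complex.exp ((t : ℂ) * Complex.I)))
        volume 0 (2 * π) :=
      (hu.div (by fun_prop) fun t => aux_ne_s7 hw' (hn2 t)).intervalIntegrable _ _
    rw [hAdef, hBdef]
    dsimp only
    rw [← intervalIntegral.integral_add i1 i2,
      ← intervalIntegral.integral_sub (i1.add i2) (hu.intervalIntegrable _ _)]
    apply intervalIntegral.integral_congr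
    intro t _
    dsimp only
    rw [hFu, aux_ker_s7 _ (by rw [norm_mul, hn1, mul_one]; exact hw)]
    have : (starRingEnd ℂ) (w * Complex.exp (-(t : ℂ) * Complex.I)) =
        (starRingEnd ℂ) w * Complex.exp ((t : ℂ) * Complex.I) := by
      rw [map_mul, ← Complex.exp_conj]; simp
    rw [this]
    ring
  have hev : poissonInt F =ᶠ[𝓝 z] fun w =>
      (1 / (2 * (π : ℂ))) * (A w + B ((starRingEnd ℂ) w) - ∫ t in (0:ℝ)..(2 * π), u t) := by
    filter_upwards [isOpen_ball.mem_nhds (show z ∈ ball (0:ℂ) 1 by simpa using hz)] with w hw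
    exact heq w (by simpa using hw)
  have hA' := hA.hasFDerivAt.restrictScalars ℝ
  have hB' := (hB.hasFDerivAt.restrictScalars ℝ).comp z Complex.conjCLE.hasFDerivAt
  have hfd := (((hA'.add hB').sub_const (∫ t in (0:ℝ)..(2 * π), u t)).const_mul
    (1 / (2 * (π : ℂ)))).congr_of_eventuallyEq hev
  unfold wdz
  rw [hfd.fderiv]
  simp
  linear_combination (-(π:ℂ)⁻¹ * 2⁻¹ * 2⁻¹ * a + (π:ℂ)⁻¹ * 2⁻¹ * 2⁻¹ * (∫ t in (0:ℝ)..(2 * π),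
      u t * Complex.exp ((t : ℂ) * Complex.I) / (1 - (starRingEnd ℂ) z * Complex.exp ((t : ℂ) * Complex.I)) ^ 2)) * Complex.I_mul_I

/-- For `F : 𝕋 → ℂ` absolutely continuous and `f = P[F]`, for every
`z ∈ 𝔻`, `i z f_z(z)` equals the Cauchy-type integral of `Ḟ`:
`i z f_z(z) = (1/(2πi)) ∫_𝕋 Ḟ(w)/(w-z) dw = (1/(2π)) ∫₀^{2π} Ḟ(e^{it})/(1 - z e^{-it}) dt`. -/
theorem stmt7 (F : ℂ → ℂ) (Fd : ℝ → ℂ) (hF : IsACDeriv F Fd) :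
    ∀ z ∈ ball (0:ℂ) 1,
      (Complex.I * z * wdz (poissonInt F) z
          = (1 / (2 * (π : ℂ) * Complex.I)) *
              ∫ t in (0:ℝ)..(2 * π),
                (Fd t / (Complex.exp ((t : ℂ) * Complex.I) - z)) *
                  (Complex.I * Complex.exp ((t : ℂ) * Complex.I))) ∧
      (Complex.I * z * wdz (poissonInt F) z
          = (1 / (2 * (π : ℂ))) *
              ∫ t in (0:ℝ)..(2 * π),
                Fd t / (1 - z * Complex.exp (-(t : ℂ) * Complex.I))) := by
  intro z hz
  have hz1 : ‖z‖ < 1 := by simpa using hz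
  obtain ⟨hint, -, hFu⟩ := hF
  have hn1 : ∀ t : ℝ, ‖Complex.exp (-(t : ℂ) * Complex.I)‖ = 1 := fun t => by
    have := Complex.norm_exp_ofReal_mul_I (-t)
    push_cast at this; exact this
  have hne : ∀ t : ℝ, 1 - z * Complex.exp (-(t : ℂ) * Complex.I) ≠ 0 := fun t => aux_ne_s7 hz1 (hn1 t)
  have hpr := intervalIntegral.continuous_primitive hint 0
  have main : Complex.I * z * wdz (poissonInt F) z
          = (1 / (2 * (π : ℂ))) *
              ∫ t in (0:ℝ)..(2 * π),
                Fd t / (1 - z * Complex.exp (-(t : ℂ) * Complex.I)) := by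
    rw [aux_poisson F (fun t => F 1 + ∫ s in (0:ℝ)..t, Fd s) (continuous_const.add hpr) hFu z hz1]
    let v : ℝ → ℂ := fun t => 1 / (1 - z * Complex.exp (-(t : ℂ) * Complex.I))
    let v' : ℝ → ℂ := fun t => -(Complex.I * z * Complex.exp (-(t : ℂ) * Complex.I) /
      (1 - z * Complex.exp (-(t : ℂ) * Complex.I)) ^ 2)
    have hv : ∀ t, HasDerivAt v (v' t) t := by
      intro t
      have h0 : HasDerivAt (fun t : ℝ => -(t : ℂ) * Complex.I) (-1 * Complex.I) t :=
        (Complex.ofRealCLM.hasDerivAt (x := t)).neg.mul_const Complex.I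
      have h1 := (h0.cexp.const_mul z).const_sub 1
      have h2 := (hasDerivAt_const t (1:ℂ)).div h1 (hne t)
      refine h2.congr_deriv ?_
      simp only [v']
      ring
    have hv' : Continuous v' :=
      (Continuous.div (by fun_prop) (by fun_prop) fun t => pow_ne_zero 2 (hne t)).neg
    have hvc : Continuous v := continuous_iff_continuousAt.2 fun t => (hv t).continuousAt
    have hfub := aux_fubini Fd v v' hint hv hv' (2 * π) (by positivity)
    have hend : v (2 * π) = v 0 := by
      simp only [v]
      have : Complex.exp (-((2 * π : ℝ) : ℂ) * Complex.I) = 1 := by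
        push_cast
        rw [neg_mul, Complex.exp_neg, Complex.exp_two_pi_mul_I]; simp
      rw [this]; simp
    have htot : ∫ s in (0:ℝ)..(2 * π), Fd s = 0 := by
      have h := hFu (2 * π)
      have : Complex.exp (((2 * π : ℝ) : ℂ) * Complex.I) = 1 := by
        push_cast
        exact Complex.exp_two_pi_mul_I
      rw [this] at h
      simpa using h
    have hv0 : ∫ t in (0:ℝ)..(2 * π), v' t = 0 := by
      rw [intervalIntegral.integral_eq_sub_of_hasDerivAt (fun t _ => hv t)
        (hv'.intervalIntegrable _ _), hend, sub_self]
    have hgv : IntervalIntegrable (fun s => Fd s * v s) volume 0 (2 * π) :=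
      (hint 0 (2 * π)).mul_continuousOn hvc.continuousOn
    have hr : ∫ s in (0:ℝ)..(2 * π), Fd s * (v (2 * π) - v s) =
        - ∫ s in (0:ℝ)..(2 * π), Fd s * v s := by
      have : ∀ s, Fd s * (v (2 * π) - v s) = Fd s * v (2 * π) - Fd s * v s := fun s => by ring
      simp_rw [this]
      rw [intervalIntegral.integral_sub ((hint _ _).mul_const _) hgv,
        intervalIntegral.integral_mul_const, htot]
      ring
    have hl : (Complex.I * z) * (∫ t in (0:ℝ)..(2 * π),
        (F 1 + ∫ s in (0:ℝ)..t, Fd s) * Complex.exp (-(t : ℂ) * Complex.I) /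
          (1 - z * Complex.exp (-(t : ℂ) * Complex.I)) ^ 2) =
        - ((F 1 * ∫ t in (0:ℝ)..(2 * π), v' t) +
          ∫ t in (0:ℝ)..(2 * π), (∫ s in (0:ℝ)..t, Fd s) * v' t) := by
      have hpv : IntervalIntegrable (fun t => (∫ s in (0:ℝ)..t, Fd s) * v' t) volume 0 (2 * π) :=
        (hpr.mul hv').intervalIntegrable _ _
      rw [← intervalIntegral.integral_const_mul, ← intervalIntegral.integral_const_mul,
        ← intervalIntegral.integral_add ((hv'.intervalIntegrable _ _).const_mul _)
          hpv, ← intervalIntegral.integral_neg]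
      apply intervalIntegral.integral_congr
      intro t _
      simp only [v']
      ring
    have hfin : ∫ t in (0:ℝ)..(2 * π), Fd t / (1 - z * Complex.exp (-(t : ℂ) * Complex.I)) =
        ∫ s in (0:ℝ)..(2 * π), Fd s * v s := by
      apply intervalIntegral.integral_congr
      intro t _
      simp only [v]
      ring
    rw [mul_left_comm, hl, hv0, hfub, hr, hfin]
    ring
  refine ⟨?_, main⟩
  rw [main]
  have : ∫ t in (0:ℝ)..(2 * π), (Fd t / (Complex.exp ((t : ℂ) * Complex.I) - z)) *
                  (Complex.I * Complex.exp ((t : ℂ) * Complex.I)) =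
      Complex.I * ∫ t in (0:ℝ)..(2 * π), Fd t / (1 - z * Complex.exp (-(t : ℂ) * Complex.I)) := by
    rw [← intervalIntegral.integral_const_mul]
    apply intervalIntegral.integral_congr
    intro t _
    dsimp only
    have he : Complex.exp ((t : ℂ) * Complex.I) ≠ 0 := Complex.exp_ne_zero _
    have h := hne t
    have e : Complex.exp ((t : ℂ) * Complex.I) - z = Complex.exp ((t : ℂ) * Complex.I) *
        (1 - z * Complex.exp (-(t : ℂ) * Complex.I)) := by
      rw [neg_mul, Complex.exp_neg]; field_simp
    rw [e]
    field_simp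
  rw [this]
  generalize (∫ t in (0:ℝ)..(2 * π), Fd t / (1 - z * Complex.exp (-(t : ℂ) * Complex.I))) = q
  have := Complex.I_ne_zero
  have hpi : (π : ℂ) ≠ 0 := by exact_mod_cast Real.pi_ne_zero
  field_simp

end
end

section
/- Let F : 𝕋 → ℂ be absolutely continuous and let f = P[F] be its Poisson integral. Then for every z ∈ 𝔻, i z · conj(f_z̄(z)) equals the Cauchy-type integral of conj(Ḟ): i z conj(f_z̄(z)) = (1/(2πi)) ∫_𝕋 conj(Ḟ(w)) / (w − z) dw. -/
open MeasureTheory Complex Metric Set Filter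
open scoped Real Topology ENNReal

noncomputable section

lemma s8_conj (f : ℝ → ℂ) (a b : ℝ) :
    ∫ t in a..b, (starRingEnd ℂ) (f t) = (starRingEnd ℂ) (∫ t in a..b, f t) := by
  simp only [intervalIntegral, map_sub, integral_conj]

lemma s8_const_ac (c : ℂ) (a b : ℝ) : AbsolutelyContinuousOnInterval (fun _ : ℝ => c) a b :=
  ContDiffOn.absolutelyContinuousOnInterval contDiffOn_const

lemma s8_int_ac (f : ℝ → ℂ) (h : ∀ a b : ℝ, IntervalIntegrable f volume a b) (a b : ℝ) :
    AbsolutelyContinuousOnInterval (fun x => ∫ t in a..x, f t) a b := by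
  have hre : ∀ a b : ℝ, IntervalIntegrable (fun t => (f t).re) volume a b := fun a b =>
    ⟨(h a b).1.re, (h a b).2.re⟩
  have him : ∀ a b : ℝ, IntervalIntegrable (fun t => (f t).im) volume a b := fun a b =>
    ⟨(h a b).1.im, (h a b).2.im⟩
  have h1 := ((hre a b).absolutelyContinuousOnInterval_intervalIntegral (c := a)
    (by simp)).fun_smul (s8_const_ac 1 a b)
  have h2 := ((him a b).absolutelyContinuousOnInterval_intervalIntegral (c := a)
    (by simp)).fun_smul (s8_const_ac I a b)
  have h3 := h1.add h2
  have e : (fun x => ∫ t in a..x, f t) = ((fun x => (∫ t in a..x, (f t).re) • (1:ℂ)) +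
      fun x => (∫ t in a..x, (f t).im) • I) := by
    funext x
    have : ∀ t, f t = ((f t).re : ℂ) + ((f t).im : ℂ) * I := fun t => (Complex.re_add_im _).symm
    simp only [Pi.add_apply, Complex.real_smul, mul_one]
    rw [← intervalIntegral.integral_ofReal, ← intervalIntegral.integral_ofReal,
      ← intervalIntegral.integral_mul_const, ← intervalIntegral.integral_add]
    · exact intervalIntegral.integral_congr fun t _ => this t
    · exact ⟨(hre a x).1.ofReal, (hre a x).2.ofReal⟩
    · exact IntervalIntegrable.mul_const ⟨(him a x).1.ofReal, (him a x).2.ofReal⟩ I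
  rw [e]
  exact h3

lemma s8_ibp (c : ℂ) (g v v' : ℝ → ℂ) (hg : ∀ a b : ℝ, IntervalIntegrable g volume a b)
    (hv : ∀ t, HasDerivAt v (v' t) t) (hv' : Continuous v') (b : ℝ) :
    ∫ t in (0:ℝ)..b, (g t * v t + (c + ∫ s in (0:ℝ)..t, g s) * v' t)
      = (c + ∫ s in (0:ℝ)..b, g s) * v b - c * v 0 := by
  have hvc : Continuous v := continuous_iff_continuousAt.2 fun t => (hv t).continuousAt
  have hvC : ContDiff ℝ 1 v := by
    rw [contDiff_one_iff_deriv]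
    refine ⟨fun t => (hv t).differentiableAt, ?_⟩
    have : deriv v = v' := funext fun t => (hv t).deriv
    rwa [this]
  have hGc : Continuous (fun t => c + ∫ s in (0:ℝ)..t, g s) :=
    continuous_const.add (intervalIntegral.continuous_primitive hg 0)
  have hGac : AbsolutelyContinuousOnInterval (fun t => c + ∫ s in (0:ℝ)..t, g s) 0 b :=
    (s8_const_ac c 0 b).add (s8_int_ac g hg 0 b)
  have hprod := hGac.fun_smul (hvC.contDiffOn (s := uIcc 0 b)).absolutelyContinuousOnInterval
  set h : ℝ → ℂ := fun t => g t * v t + (c + ∫ s in (0:ℝ)..t, g s) * v' t with hh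
  have hint : ∀ a b : ℝ, IntervalIntegrable h volume a b := fun a b =>
    ((hg a b).mul_continuousOn hvc.continuousOn).add ((hGc.mul hv').intervalIntegrable a b)
  have hac := hprod.sub (s8_int_ac h hint 0 b)
  obtain ⟨C, hC⟩ := hac.const_of_ae_hasDerivAt_zero (by
    filter_upwards [(hg 0 b).ae_hasDerivAt_integral, (hint 0 b).ae_hasDerivAt_integral]
      with x h1 h2 hx
    have e1 := ((h1 hx 0 (by simp)).const_add c).mul (hv x)
    have e2 := e1.sub (h2 hx 0 (by simp))
    have e3 : g x * v x + (c + ∫ s in (0:ℝ)..x, g s) * v' x - h x = 0 := by simp [hh]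
    rw [e3] at e2
    exact e2)
  have q1 := hC 0 (by simp)
  have q2 := hC b (by simp)
  simp only [Pi.sub_apply, smul_eq_mul, intervalIntegral.integral_same, add_zero, sub_zero]
    at q1 q2
  rw [← q1] at q2
  linear_combination -q2

lemma s8_ne (t : ℝ) (z : ℂ) (hz : ‖z‖ < 1) : Complex.exp ((t : ℂ) * I) - z ≠ 0 := by
  intro h
  have := Complex.norm_exp_ofReal_mul_I t
  rw [sub_eq_zero.1 h] at this
  linarith

lemma s8_cont (k : ℝ → ℂ) (hk : Continuous k) (n : ℕ) (z : ℂ) (hz : ‖z‖ < 1) :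
    Continuous (fun t : ℝ => k t / (Complex.exp ((t : ℂ) * I) - z) ^ n) := by
  refine hk.div (by fun_prop) fun t => pow_ne_zero _ (s8_ne t z hz)

lemma s8_deriv (k : ℝ → ℂ) (hk : Continuous k) (z : ℂ) (hz : ‖z‖ < 1) :
    HasDerivAt (fun ζ => ∫ t in (0:ℝ)..(2 * π), k t / (Complex.exp ((t : ℂ) * I) - ζ) ^ 1)
      (∫ t in (0:ℝ)..(2 * π), k t / (Complex.exp ((t : ℂ) * I) - z) ^ 2) z := by
  obtain ⟨r, hr1, hr2⟩ := exists_between hz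
  have hin : ∀ x ∈ ball (0:ℂ) r, ‖x‖ < r := fun x hx => by simpa using hx
  have hs : ball (0:ℂ) r ∈ 𝓝 z := isOpen_ball.mem_nhds (by simpa using hr1)
  refine (intervalIntegral.hasDerivAt_integral_of_dominated_loc_of_deriv_le
    (F := fun ζ t => k t / (Complex.exp ((t : ℂ) * I) - ζ) ^ 1)
    (F' := fun ζ t => k t / (Complex.exp ((t : ℂ) * I) - ζ) ^ 2)
    (bound := fun t => ‖k t‖ / (1 - r) ^ 2) hs ?_ ?_ ?_ ?_ ?_ ?_).2
  · filter_upwards [hs] with x hx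
    exact (s8_cont k hk 1 x ((hin x hx).trans hr2)).aestronglyMeasurable
  · exact (s8_cont k hk 1 z hz).intervalIntegrable _ _
  · exact (s8_cont k hk 2 z hz).aestronglyMeasurable
  · refine Eventually.of_forall fun t _ x hx => ?_
    rw [norm_div, norm_pow]
    have h1 : 1 - r ≤ ‖Complex.exp ((t : ℂ) * I) - x‖ := by
      have := norm_sub_norm_le (Complex.exp ((t : ℂ) * I)) x
      rw [Complex.norm_exp_ofReal_mul_I] at this
      linarith [hin x hx]
    have h2 : 0 < 1 - r := by linarith
    gcongr
  · exact (hk.norm.div_const _).intervalIntegrable _ _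
  · refine Eventually.of_forall fun t _ x hx => ?_
    have hne := s8_ne t x ((hin x hx).trans hr2)
    have := (((hasDerivAt_id x).const_sub (Complex.exp ((t : ℂ) * I))).inv hne).const_mul (k t)
    convert! this using 1
    · funext y; simp [div_eq_mul_inv]
    · simp [div_eq_mul_inv]

lemma s8_ker (t : ℝ) (z : ℂ) (hz : ‖z‖ < 1) :
    (poissonKer (z * Complex.exp (-(t : ℂ) * I)) : ℂ)
      = Complex.exp ((t : ℂ) * I) / (Complex.exp ((t : ℂ) * I) - z)
        + (starRingEnd ℂ) (Complex.exp ((t : ℂ) * I) / (Complex.exp ((t : ℂ) * I) - z)) - 1 := by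
  have hne := s8_ne t z hz
  have hc : (starRingEnd ℂ) (Complex.exp ((t : ℂ) * I)) = Complex.exp (-(t : ℂ) * I) := by
    rw [← Complex.exp_conj]; simp
  have hm : Complex.exp ((t : ℂ) * I) * Complex.exp (-(t : ℂ) * I) = 1 := by
    rw [← Complex.exp_add]; simp
  have hm' : Complex.exp (-(t : ℂ) * I) ≠ 0 := Complex.exp_ne_zero _
  have hw0 : Complex.exp ((t : ℂ) * I) ≠ 0 := Complex.exp_ne_zero _
  have hc2 : (starRingEnd ℂ) (Complex.exp (-(t : ℂ) * I)) = Complex.exp ((t : ℂ) * I) := by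
    rw [← hc, Complex.conj_conj]
  have hne2 : (starRingEnd ℂ) (Complex.exp ((t : ℂ) * I) - z) ≠ 0 := by
    exact (map_ne_zero (starRingEnd ℂ)).2 hne
  unfold poissonKer
  push_cast
  rw [← Complex.mul_conj', ← Complex.mul_conj', map_div₀]
  simp only [map_sub, map_mul, map_one, hc, hc2] at hne2 ⊢
  generalize Complex.exp ((t : ℂ) * I) = w at *
  generalize Complex.exp (-(t : ℂ) * I) = u at *
  generalize (starRingEnd ℂ) z = y at *
  have hu : u = w⁻¹ := eq_inv_of_mul_eq_one_right hm
  subst hu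
  have h3 : 1 - w * y ≠ 0 := by
    intro h; apply hne2; field_simp; linear_combination h
  have h4 : 1 - y * w ≠ 0 := by rwa [mul_comm]
  have e1 : 1 - z * w⁻¹ = (w - z) / w := by field_simp
  have e2 : w⁻¹ - y = (1 - w * y) / w := by field_simp
  rw [e1, e2, mul_comm y w]
  field_simp
  ring

/-- For `F : 𝕋 → ℂ` absolutely continuous and `f = P[F]`, for every
`z ∈ 𝔻`, `i z conj(f_z̄(z))` equals the Cauchy-type integral of `conj Ḟ`:
`i z conj(f_z̄(z)) = (1/(2πi)) ∫_𝕋 conj(Ḟ(w))/(w-z) dw`. -/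
theorem stmt8 (F : ℂ → ℂ) (Fd : ℝ → ℂ) (hF : IsACDeriv F Fd) :
    ∀ z ∈ ball (0:ℂ) 1,
      Complex.I * z * (starRingEnd ℂ) (wdzb (poissonInt F) z)
        = (1 / (2 * (π : ℂ) * Complex.I)) *
            ∫ t in (0:ℝ)..(2 * π),
              ((starRingEnd ℂ) (Fd t) / (Complex.exp ((t : ℂ) * Complex.I) - z)) *
                (Complex.I * Complex.exp ((t : ℂ) * Complex.I)) := by
  intro z hz0
  have hz : ‖z‖ < 1 := by simpa using hz0
  obtain ⟨hi, -, hG⟩ := hF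
  set w : ℝ → ℂ := fun t => Complex.exp ((t : ℂ) * I) with hw
  have hwc : Continuous w := by fun_prop
  set G : ℝ → ℂ := fun t => F (w t) with hGdef
  have hGe : ∀ t, G t = F 1 + ∫ s in (0:ℝ)..t, Fd s := hG
  have hGc : Continuous G := by
    have : G = fun t => F 1 + ∫ s in (0:ℝ)..t, Fd s := funext hGe
    rw [this]
    exact continuous_const.add (intervalIntegral.continuous_primitive hi 0)
  have hGcc : Continuous (fun t => (starRingEnd ℂ) (G t)) := Complex.continuous_conj.comp hGc
  have d1 := s8_deriv (fun t => G t * w t) (hGc.mul hwc) z hz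
  have d2 := s8_deriv (fun t => (starRingEnd ℂ) (G t) * w t) (hGcc.mul hwc) z hz
  set D1 := ∫ t in (0:ℝ)..(2 * π), G t * w t / (Complex.exp ((t : ℂ) * I) - z) ^ 2
  set D2 := ∫ t in (0:ℝ)..(2 * π),
    (starRingEnd ℂ) (G t) * w t / (Complex.exp ((t : ℂ) * I) - z) ^ 2 with hD2
  set C1 : ℂ → ℂ := fun ζ => ∫ t in (0:ℝ)..(2 * π),
    G t * w t / (Complex.exp ((t : ℂ) * I) - ζ) ^ 1 with hC1
  set C2 : ℂ → ℂ := fun ζ => ∫ t in (0:ℝ)..(2 * π),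
    (starRingEnd ℂ) (G t) * w t / (Complex.exp ((t : ℂ) * I) - ζ) ^ 1 with hC2
  have hP : ∀ ζ ∈ ball (0:ℂ) 1, poissonInt F ζ = (1 / (2 * π) : ℂ) *
      (C1 ζ + (starRingEnd ℂ) (C2 ζ) - ∫ t in (0:ℝ)..(2 * π), G t) := by
    intro ζ hζ
    have hζ' : ‖ζ‖ < 1 := by simpa using hζ
    unfold poissonInt
    congr 1
    have c1 := s8_cont (fun t => G t * w t) (hGc.mul hwc) 1 ζ hζ'
    have c2 := Complex.continuous_conj.comp
      (s8_cont (fun t => (starRingEnd ℂ) (G t) * w t) (hGcc.mul hwc) 1 ζ hζ')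
    rw [Function.comp_def] at c2
    rw [hC1, hC2]
    simp only
    rw [← s8_conj, ← intervalIntegral.integral_add (c1.intervalIntegrable _ _)
      (c2.intervalIntegrable _ _), ← intervalIntegral.integral_sub
      ((c1.fun_add c2).intervalIntegrable _ _) (hGc.intervalIntegrable _ _)]
    refine intervalIntegral.integral_congr fun t _ => ?_
    simp only [s8_ker t ζ hζ', hGdef, hw, map_div₀, map_mul, map_pow, Complex.conj_conj, pow_one,
      Function.comp]
    ring
  have hev : poissonInt F =ᶠ[𝓝 z] fun ζ => (1 / (2 * π) : ℂ) *
      (C1 ζ + (starRingEnd ℂ) (C2 ζ) - ∫ t in (0:ℝ)..(2 * π), G t) := by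
    filter_upwards [isOpen_ball.mem_nhds hz0] with ζ hζ using hP ζ hζ
  have f1 : HasFDerivAt C1 _ z := d1.hasFDerivAt.restrictScalars ℝ
  have f2 : HasFDerivAt C2 _ z := d2.hasFDerivAt.restrictScalars ℝ
  have f3 := (Complex.conjCLE.toContinuousLinearMap.hasFDerivAt (x := C2 z)).comp z f2
  have f4 := (((f1.add f3).sub_const (∫ t in (0:ℝ)..(2 * π), G t)).const_mul
    (1 / (2 * π) : ℂ)).congr_of_eventuallyEq hev
  have hwd : (starRingEnd ℂ) (wdzb (poissonInt F) z) = (1 / (2 * π) : ℂ) * D2 := by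
    unfold wdzb
    rw [f4.fderiv]
    have h2c : (starRingEnd ℂ) 2 = 2 := Complex.conj_ofNat 2
    simp [h2c]
    linear_combination ((1/4) * (π : ℂ)⁻¹ * ((starRingEnd ℂ) D1 - D2)) * Complex.I_sq
  rw [hwd]
  -- integration by parts
  have hgi : ∀ a b : ℝ, IntervalIntegrable (fun t => (starRingEnd ℂ) (Fd t)) volume a b :=
    fun a b => ⟨(Complex.conjCLE.toContinuousLinearMap.integrable_comp (hi a b).1),
      (Complex.conjCLE.toContinuousLinearMap.integrable_comp (hi a b).2)⟩
  have hcG : ∀ t, (starRingEnd ℂ) (G t) = (starRingEnd ℂ) (F 1) +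
      ∫ s in (0:ℝ)..t, (starRingEnd ℂ) (Fd s) := by
    intro t
    rw [hGe, map_add, ← s8_conj]
  have hv : ∀ t : ℝ, HasDerivAt (fun t => z / (w t - z)) (-I * (z * w t) / (w t - z) ^ 2) t := by
    intro t
    have hne := s8_ne t z hz
    have h1 : HasDerivAt w (w t * I) t := by
      have h0 : HasDerivAt (fun t : ℝ => (t : ℂ) * I) (1 * I) t :=
        (Complex.ofRealCLM.hasDerivAt (x := t)).mul_const I
      simpa using h0.cexp
    have h2 := ((h1.sub_const z).inv hne).const_mul z
    convert! h2 using 1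
    simp only [hw]
    ring
  have hibp := s8_ibp ((starRingEnd ℂ) (F 1)) _ _ _ hgi hv
    (s8_cont (fun t => -I * (z * w t)) (by fun_prop) 2 z hz) (2 * π)
  have hw2 : w (2 * π) = 1 := by simp [hw, Complex.exp_two_pi_mul_I]
  have hw0 : w 0 = 1 := by simp [hw]
  have hper : ∫ s in (0:ℝ)..(2 * π), (starRingEnd ℂ) (Fd s) = 0 := by
    have := hcG (2 * π)
    simp only [hGdef, hw2] at this
    linear_combination -this
  have cv : Continuous (fun t => z / (w t - z)) := by
    simpa using s8_cont (fun t => z) (by fun_prop) 1 z hz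
  have i1 : IntervalIntegrable (fun t => (starRingEnd ℂ) (Fd t) * (z / (w t - z))) volume
      0 (2 * π) := (hgi _ _).mul_continuousOn cv.continuousOn
  have i2 : Continuous (fun t => (starRingEnd ℂ) (G t) * (-I * (z * w t) / (w t - z) ^ 2)) :=
    hGcc.mul (s8_cont (fun t => -I * (z * w t)) (by fun_prop) 2 z hz)
  simp only [← hcG] at hibp
  rw [intervalIntegral.integral_add i1 (i2.intervalIntegrable _ _), hw2, hw0, hcG, hper] at hibp
  have e2 : ∫ t in (0:ℝ)..(2 * π), (starRingEnd ℂ) (G t) * (-I * (z * w t) / (w t - z) ^ 2)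
      = -I * z * D2 := by
    rw [hD2, ← intervalIntegral.integral_const_mul]
    refine intervalIntegral.integral_congr fun t _ => ?_
    simp only [hw]
    ring
  have e3 : ∫ t in (0:ℝ)..(2 * π), ((starRingEnd ℂ) (Fd t) / (Complex.exp ((t : ℂ) * I) - z)) *
      (I * Complex.exp ((t : ℂ) * I)) =
      I * (∫ t in (0:ℝ)..(2 * π), (starRingEnd ℂ) (Fd t) * (z / (w t - z))) := by
    have : I * (∫ t in (0:ℝ)..(2 * π), (starRingEnd ℂ) (Fd t) * (z / (w t - z))) =
      I * (∫ t in (0:ℝ)..(2 * π), ((starRingEnd ℂ) (Fd t) * (z / (w t - z))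
        + (starRingEnd ℂ) (Fd t))) := by
      rw [intervalIntegral.integral_add i1 (hgi _ _), hper, add_zero]
    rw [this, ← intervalIntegral.integral_const_mul]
    refine intervalIntegral.integral_congr fun t _ => ?_
    have hne := s8_ne t z hz
    simp only [hw]
    field_simp
    ring
  rw [e2] at hibp
  have hpi : (π : ℂ) ≠ 0 := by exact_mod_cast Real.pi_ne_zero
  have hX : I * z * D2 = ∫ t in (0:ℝ)..(2 * π), (starRingEnd ℂ) (Fd t) * (z / (w t - z)) := by
    linear_combination -hibp
  rw [e3, ← hX]
  field_simp

end
end
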